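/- arXiv:2203.14665 — 10 statements merged into one kernel-verified Lean document; each statement's English description precedes it below -/
import Mathlib

section
/- Let n ≥ 1 and let 1 ≤ s < r ≤ n+1 be integers. Define, for 1 ≤ k ≤ n, i_k = k if k < r and i_k = k+1 if k ≥ r, and j_k = k if k < s and j_k = k+1 if k ≥ s. Then for every permutation σ of {1, …, n}, one has Σ_{k : j_{σ(k)} > i_k} (j_{σ(k)} − i_k) ≥ r − s. -/
/-! The sequence `i` lists `{1, …, n+1}` without `r` and `j` lists it without `s`, so
`∑ j - ∑ i = r - s`. A permutation does not change `∑ j`, hence the signed differences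
`j_{σ(k)} - i_k` sum to `r - s`, and discarding the negative terms can only increase the sum. -/

/-- For `1 ≤ s < r ≤ n+1`, with `i_k = k` if `k < r` and `k+1` otherwise,
`j_k = k` if `k < s` and `k+1` otherwise (for `k` ranging over `{1, …, n}`, encoded as
`Fin n` via `k ↦ k.val + 1`), and any permutation `σ` of `{1, …, n}`, one has
`∑_{k : j_{σ(k)} > i_k} (j_{σ(k)} − i_k) ≥ r − s`. -/
theorem crystal_perm_cofactor_inequality
    (n r s : ℕ) (hn : 1 ≤ n) (hs : 1 ≤ s) (hsr : s < r) (hr : r ≤ n + 1)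
    (i j : ℕ → ℕ)
    (hi : ∀ k, i k = if k < r then k else k + 1)
    (hj : ∀ k, j k = if k < s then k else k + 1)
    (σ : Equiv.Perm (Fin n)) :
    r - s ≤
      ∑ k ∈ Finset.univ.filter (fun k : Fin n => i (k.val + 1) < j ((σ k).val + 1)),
        (j ((σ k).val + 1) - i (k.val + 1)) := by
  -- Termwise, `j_k - i_k` is the indicator of `s ≤ k < r`.
  have hcount : ∑ k : Fin n, (if s ≤ k.val + 1 ∧ k.val + 1 < r then 1 else 0) = r - s := by
    rw [Fin.sum_univ_eq_sum_range (fun k => if s ≤ k + 1 ∧ k + 1 < r then 1 else 0) n,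
      ← Finset.sum_filter, ← Finset.card_eq_sum_ones]
    have h : (Finset.range n).filter (fun k => s ≤ k + 1 ∧ k + 1 < r)
        = Finset.Ico (s - 1) (r - 1) := by
      ext k
      simp only [Finset.mem_filter, Finset.mem_range, Finset.mem_Ico]
      omega
    rw [h, Nat.card_Ico]
    omega
  have hsum : ∑ k : Fin n, j (k.val + 1) = ∑ k : Fin n, i (k.val + 1) + (r - s) := by
    rw [← hcount, ← Finset.sum_add_distrib]
    refine Finset.sum_congr rfl fun k _ => ?_
    rw [hi, hj]
    split_ifs <;> omega
  have hperm : ∑ k : Fin n, j ((σ k).val + 1) = ∑ k : Fin n, j (k.val + 1) :=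
    Equiv.sum_comp σ (fun k : Fin n => j (k.val + 1))
  -- Truncated subtraction is the positive part, so the filter may be dropped.
  have hfilter : ∑ k ∈ Finset.univ.filter (fun k : Fin n => i (k.val + 1) < j ((σ k).val + 1)),
        (j ((σ k).val + 1) - i (k.val + 1))
      = ∑ k : Fin n, (j ((σ k).val + 1) - i (k.val + 1)) := by
    rw [Finset.sum_filter]
    refine Finset.sum_congr rfl fun k _ => ?_
    split_ifs <;> omega
  have hle : ∑ k : Fin n, j ((σ k).val + 1)
      ≤ ∑ k : Fin n, i (k.val + 1) + ∑ k : Fin n, (j ((σ k).val + 1) - i (k.val + 1)) := by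
    rw [← Finset.sum_add_distrib]
    exact Finset.sum_le_sum fun k _ => by omega
  omega
end

section
/- Let 𝒜 be a complex Banach algebra, let n ≥ 1, and for each q ∈ (0,1) let A_{i,j}(q), B_{i,j}(q) ∈ 𝒜 for 1 ≤ i, j ≤ n+1. Assume that for all i, j the rescaled limits Â_{i,j} = lim_{q→0+} (−q)^{min(i−j,0)} A_{i,j}(q) and B̂_{i,j} = lim_{q→0+} (−q)^{min(i−j,0)} B_{i,j}(q) exist in norm. Then for all i, j the rescaled limit lim_{q→0+} (−q)^{min(i−j,0)} Σ_{k=1}^{n+1} A_{i,k}(q) B_{k,j}(q) exists in norm, and it equals Σ_{k=min(i,j)}^{max(i,j)} Â_{i,k} B̂_{k,j}. -/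
/-!
Write `m(i,j) = min(i-j,0)`. If `d` is the distance from `k` to the interval
`[min i j, max i j]`, then `m(i,j) = m(i,k) + m(k,j) + d`. Hence the `k`-th summand of the
rescaled product is `(-q)^d` times the product of the two rescaled entries. As `q → 0+`, the factor
`(-q)^d` tends to `1` if `d = 0`, that is if `k` lies in the interval, and to `0` otherwise, so that
precisely the summands with `min i j ≤ k ≤ max i j` survive.
-/

open Filter

/-- The rescaling factor `(−q)^{min(i−j,0)}` (as a complex scalar, `q` real). -/
noncomputable def rescale (i j : ℕ) (q : ℝ) : ℂ := (-(q : ℂ)) ^ (min ((i : ℤ) - (j : ℤ)) 0)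

/-- The distance from `k` to the interval `[min i j, max i j]`; each truncated difference vanishes
unless `k` lies strictly outside the interval on the corresponding side. -/
def gapDist (i j k : ℕ) : ℕ := (min i j - k) + (k - max i j)

lemma rescale_eq_mul (i j k : ℕ) {q : ℝ} (hq : q ≠ 0) :
    rescale i j q = (-(q : ℂ)) ^ gapDist i j k * (rescale i k q * rescale k j q) := by
  have h0 : (-(q : ℂ)) ≠ 0 := by simpa using hq
  unfold rescale gapDist
  rw [← zpow_natCast, ← zpow_add₀ h0, ← zpow_add₀ h0]
  congr 1
  omega

lemma gapDist_eq_zero_iff (i j k : ℕ) :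
    gapDist i j k = 0 ↔ k ∈ Finset.Icc (min i j) (max i j) := by
  rw [Finset.mem_Icc]
  unfold gapDist
  omega

lemma tendsto_neg_pow (d : ℕ) :
    Tendsto (fun q : ℝ => (-(q : ℂ)) ^ d) (nhdsWithin 0 (Set.Ioo 0 1))
      (nhds (if d = 0 then 1 else 0)) := by
  have hc : Continuous (fun q : ℝ => (-(q : ℂ)) ^ d) := by fun_prop
  have h := (hc.tendsto 0).mono_left (nhdsWithin_le_nhds (s := Set.Ioo 0 1))
  simpa [zero_pow_eq] using h

/-- if in a complex Banach algebra the rescaled limits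
`Âᵢⱼ = lim_{q→0+} (−q)^{min(i−j,0)} Aᵢⱼ(q)` and `B̂ᵢⱼ` exist in norm for all
`1 ≤ i, j ≤ n+1`, then the rescaled limit of the matrix product entry
`∑_{k=1}^{n+1} A_{i,k}(q) B_{k,j}(q)` exists and equals
`∑_{k=min(i,j)}^{max(i,j)} Â_{i,k} B̂_{k,j}`. -/
theorem rescaled_limit_of_product
    {A : Type*} [NormedRing A] [NormedAlgebra ℂ A] [CompleteSpace A]
    (n : ℕ) (hn : 1 ≤ n)
    (Af Bf : ℝ → ℕ → ℕ → A) (Ahat Bhat : ℕ → ℕ → A)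
    (hA : ∀ i j, i ∈ Finset.Icc 1 (n + 1) → j ∈ Finset.Icc 1 (n + 1) →
      Tendsto (fun q : ℝ => rescale i j q • Af q i j)
        (nhdsWithin 0 (Set.Ioo 0 1)) (nhds (Ahat i j)))
    (hB : ∀ i j, i ∈ Finset.Icc 1 (n + 1) → j ∈ Finset.Icc 1 (n + 1) →
      Tendsto (fun q : ℝ => rescale i j q • Bf q i j)
        (nhdsWithin 0 (Set.Ioo 0 1)) (nhds (Bhat i j)))
    (i j : ℕ) (hi : i ∈ Finset.Icc 1 (n + 1)) (hj : j ∈ Finset.Icc 1 (n + 1)) :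
    Tendsto (fun q : ℝ => rescale i j q • ∑ k ∈ Finset.Icc 1 (n + 1), Af q i k * Bf q k j)
      (nhdsWithin 0 (Set.Ioo 0 1))
      (nhds (∑ k ∈ Finset.Icc (min i j) (max i j), Ahat i k * Bhat k j)) := by
  have hsum : ∑ k ∈ Finset.Icc (min i j) (max i j), Ahat i k * Bhat k j =
      ∑ k ∈ Finset.Icc 1 (n + 1),
        (if gapDist i j k = 0 then (1 : ℂ) else 0) • (Ahat i k * Bhat k j) := by
    rw [Finset.mem_Icc] at hi hj
    have hsub : Finset.Icc (min i j) (max i j) ⊆ Finset.Icc 1 (n + 1) :=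
      Finset.Icc_subset_Icc (by omega) (by omega)
    rw [← Finset.sum_subset hsub]
    · refine Finset.sum_congr rfl fun k hk => ?_
      rw [if_pos ((gapDist_eq_zero_iff i j k).2 hk), one_smul]
    · intro k _ hk
      rw [if_neg (mt (gapDist_eq_zero_iff i j k).1 hk), zero_smul]
  rw [hsum]
  have hlim := tendsto_finsetSum (Finset.Icc 1 (n + 1)) fun k hk =>
    (tendsto_neg_pow (gapDist i j k)).smul ((hA i k hi hk).mul (hB k j hk hj))
  refine hlim.congr' ?_
  filter_upwards [self_mem_nhdsWithin] with q hq
  rw [Finset.smul_sum]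
  refine Finset.sum_congr rfl fun k _ => ?_
  rw [rescale_eq_mul i j k hq.1.ne', smul_mul_smul_comm, smul_smul]
end

section
/- Let 𝒜 be a complex Banach algebra and n ≥ 1. For each q ∈ (0,1), let (Y_{i,j}(q))_{1≤i,j≤n+1} be elements of 𝒜 satisfying the SU_q(n+1) commutation relations. Assume that for all i, j the rescaled limit Z_{i,j} = lim_{q→0+} (−q)^{min(i−j,0)} Y_{i,j}(q) exists in norm. Then the Z_{i,j} satisfy: (C1) Z_{i,j} Z_{i,l} = 0 whenever j < l; (C2) Z_{i,j} Z_{k,j} = 0 whenever i < k; (C3) Z_{i,l} Z_{k,j} = Z_{k,j} Z_{i,l} whenever i < k and j < l; (C4) Z_{i,l} Z_{k,j} = 0 whenever i < k, j < l and max{i,j} ≥ min{k,l}; (C5) Z_{i,j} Z_{k,l} = Z_{k,l} Z_{i,j} whenever i < k, j < l and max{i,j} + 1 < min{k,l}; (C6) Z_{i,j} Z_{k,l} − Z_{k,l} Z_{i,j} = Z_{i,l} Z_{k,j} whenever i < k, j < l and max{i,j} + 1 = min{k,l}. -/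
/-!
Put `y i j = (-q) ^ min (i - j) 0 • Y i j`, so that `y i j → Z i j`. The relations for products in
a common row or column, and the commutation of `Y i l` with `Y k j`, are homogeneous, so they hold
for `y` as well, and the first three crystallised relations follow by letting `q → 0`.

The remaining relation becomes `[y i j, y k l] = (q - q⁻¹) (-q) ^ d • (y i l * y k j)`, where
`d = min (i - j) 0 + min (k - l) 0 - min (i - l) 0 - min (k - j) 0`. This mixed second difference of
`x ↦ min x 0` is the length `max (min k l - max i j) 0` of the overlap of the intervals `[i, k]`
and `[j, l]` (`overlap_exponent`). If `d = 0`, multiplying by `q` and letting `q → 0` gives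
`Z i l * Z k j = 0`.
If `d = e + 1`, the coefficient is `(1 - q ^ 2) (-q) ^ e`, which tends to `0` if `e > 0`
and to `1` if `e = 0`, so that the commutator of `Z i j` and `Z k l` is `0` or `Z i l * Z k j`.
-/

open Filter

/-- The exponent of `-q` picked up by the cross relation under rescaling is the length of
`[i, k] ∩ [j, l]`; natural-number subtraction supplies the value `0` for disjoint intervals. -/
lemma overlap_exponent {i k j l : ℕ} (hik : i < k) (hjl : j < l) :
    min ((i : ℤ) - j) 0 + min ((k : ℤ) - l) 0 =
      ((min k l - max i j : ℕ) : ℤ) + (min ((i : ℤ) - l) 0 + min ((k : ℤ) - j) 0) := by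
  omega

lemma rescale_mul_rescale {i k j l : ℕ} (hik : i < k) (hjl : j < l) {q : ℝ} (hq : q ≠ 0) :
    rescale i j q * rescale k l q =
      (-(q : ℂ)) ^ (min k l - max i j) * (rescale i l q * rescale k j q) := by
  have h : -(q : ℂ) ≠ 0 := by simpa using hq
  simp only [rescale]
  rw [← zpow_add₀ h, ← zpow_add₀ h, overlap_exponent hik hjl, zpow_add₀ h, zpow_natCast]

/-- if for each `q ∈ (0,1)` the family `(Y_{i,j}(q))_{1≤i,j≤n+1}` in a complex
Banach algebra satisfies the `SU_q(n+1)` commutation relations and all rescaled limits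
`Z_{i,j} = lim_{q→0+} (−q)^{min(i−j,0)} Y_{i,j}(q)` exist in norm, then the `Z_{i,j}`
satisfy the crystallised relations (C1)–(C6). -/
theorem crystallised_relations_of_SUq_relations
    {A : Type*} [NormedRing A] [NormedAlgebra ℂ A] [CompleteSpace A]
    (n : ℕ) (hn : 1 ≤ n)
    (Y : ℝ → ℕ → ℕ → A) (Z : ℕ → ℕ → A)
    (hY1 : ∀ q ∈ Set.Ioo (0:ℝ) 1, ∀ i j l,
      i ∈ Finset.Icc 1 (n+1) → j ∈ Finset.Icc 1 (n+1) → l ∈ Finset.Icc 1 (n+1) →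
      j < l → Y q i j * Y q i l = (q : ℂ) • (Y q i l * Y q i j))
    (hY2 : ∀ q ∈ Set.Ioo (0:ℝ) 1, ∀ i k j,
      i ∈ Finset.Icc 1 (n+1) → k ∈ Finset.Icc 1 (n+1) → j ∈ Finset.Icc 1 (n+1) →
      i < k → Y q i j * Y q k j = (q : ℂ) • (Y q k j * Y q i j))
    (hY3 : ∀ q ∈ Set.Ioo (0:ℝ) 1, ∀ i k j l,
      i ∈ Finset.Icc 1 (n+1) → k ∈ Finset.Icc 1 (n+1) →
      j ∈ Finset.Icc 1 (n+1) → l ∈ Finset.Icc 1 (n+1) →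
      i < k → j < l → Y q i l * Y q k j = Y q k j * Y q i l)
    (hY4 : ∀ q ∈ Set.Ioo (0:ℝ) 1, ∀ i k j l,
      i ∈ Finset.Icc 1 (n+1) → k ∈ Finset.Icc 1 (n+1) →
      j ∈ Finset.Icc 1 (n+1) → l ∈ Finset.Icc 1 (n+1) →
      i < k → j < l →
      Y q i j * Y q k l - Y q k l * Y q i j = ((q : ℂ) - (q : ℂ)⁻¹) • (Y q i l * Y q k j))
    (hZ : ∀ i j, i ∈ Finset.Icc 1 (n+1) → j ∈ Finset.Icc 1 (n+1) →
      Tendsto (fun q : ℝ => rescale i j q • Y q i j)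
        (nhdsWithin 0 (Set.Ioo 0 1)) (nhds (Z i j))) :
    (∀ i j l, i ∈ Finset.Icc 1 (n+1) → j ∈ Finset.Icc 1 (n+1) → l ∈ Finset.Icc 1 (n+1) →
      j < l → Z i j * Z i l = 0) ∧
    (∀ i k j, i ∈ Finset.Icc 1 (n+1) → k ∈ Finset.Icc 1 (n+1) → j ∈ Finset.Icc 1 (n+1) →
      i < k → Z i j * Z k j = 0) ∧
    (∀ i k j l, i ∈ Finset.Icc 1 (n+1) → k ∈ Finset.Icc 1 (n+1) →
      j ∈ Finset.Icc 1 (n+1) → l ∈ Finset.Icc 1 (n+1) →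
      i < k → j < l → Z i l * Z k j = Z k j * Z i l) ∧
    (∀ i k j l, i ∈ Finset.Icc 1 (n+1) → k ∈ Finset.Icc 1 (n+1) →
      j ∈ Finset.Icc 1 (n+1) → l ∈ Finset.Icc 1 (n+1) →
      i < k → j < l → min k l ≤ max i j → Z i l * Z k j = 0) ∧
    (∀ i k j l, i ∈ Finset.Icc 1 (n+1) → k ∈ Finset.Icc 1 (n+1) →
      j ∈ Finset.Icc 1 (n+1) → l ∈ Finset.Icc 1 (n+1) →
      i < k → j < l → max i j + 1 < min k l → Z i j * Z k l = Z k l * Z i j) ∧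
    (∀ i k j l, i ∈ Finset.Icc 1 (n+1) → k ∈ Finset.Icc 1 (n+1) →
      j ∈ Finset.Icc 1 (n+1) → l ∈ Finset.Icc 1 (n+1) →
      i < k → j < l → max i j + 1 = min k l →
      Z i j * Z k l - Z k l * Z i j = Z i l * Z k j) := by
  have hmem : ∀ᶠ q : ℝ in nhdsWithin 0 (Set.Ioo 0 1), q ∈ Set.Ioo (0 : ℝ) 1 :=
    eventually_mem_nhdsWithin
  have : (nhdsWithin (0 : ℝ) (Set.Ioo 0 1)).NeBot := by
    rw [nhdsWithin_Ioo_eq_nhdsGT one_pos]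
    infer_instance
  have hq0 : Tendsto (fun q : ℝ => (q : ℂ)) (nhdsWithin 0 (Set.Ioo 0 1)) (nhds 0) := by
    have := (Complex.continuous_ofReal.tendsto 0).mono_left
      (nhdsWithin_le_nhds (s := Set.Ioo (0 : ℝ) 1))
    simpa using this
  -- A relation `a * b = q • (b * a)` is homogeneous, so it survives rescaling and forces the
  -- product of the limits to vanish.
  have hzero : ∀ i j k l, i ∈ Finset.Icc 1 (n+1) → j ∈ Finset.Icc 1 (n+1) →
      k ∈ Finset.Icc 1 (n+1) → l ∈ Finset.Icc 1 (n+1) →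
      (∀ q ∈ Set.Ioo (0:ℝ) 1, Y q i j * Y q k l = (q : ℂ) • (Y q k l * Y q i j)) →
      Z i j * Z k l = 0 := by
    intro i j k l hi hj hk hl h
    have hR := hq0.smul ((hZ k l hk hl).mul (hZ i j hi hj))
    rw [zero_smul] at hR
    refine tendsto_nhds_unique_of_eventuallyEq ((hZ i j hi hj).mul (hZ k l hk hl)) hR ?_
    filter_upwards [hmem] with q hq
    simp only [smul_mul_smul_comm, h q hq, smul_smul]
    congr 1
    ring
  -- The cross relation for the rescaled generators, multiplied by `q` to avoid `q⁻¹`.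
  have hcross : ∀ i k j l, i ∈ Finset.Icc 1 (n+1) → k ∈ Finset.Icc 1 (n+1) →
      j ∈ Finset.Icc 1 (n+1) → l ∈ Finset.Icc 1 (n+1) → i < k → j < l →
      ∀ q ∈ Set.Ioo (0:ℝ) 1,
      (q : ℂ) • ((rescale i j q • Y q i j) * (rescale k l q • Y q k l) -
          (rescale k l q • Y q k l) * (rescale i j q • Y q i j)) =
        (((q : ℂ) ^ 2 - 1) * (-(q : ℂ)) ^ (min k l - max i j)) •
          ((rescale i l q • Y q i l) * (rescale k j q • Y q k j)) := by
    intro i k j l hi hk hj hl hik hjl q hq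
    have hqc : (q : ℂ) ≠ 0 := by simpa using hq.1.ne'
    simp only [smul_mul_smul_comm]
    rw [mul_comm (rescale k l q), ← smul_sub, hY4 q hq i k j l hi hk hj hl hik hjl,
      rescale_mul_rescale hik hjl hq.1.ne']
    simp only [smul_smul]
    congr 1
    field_simp
  have hone : Tendsto (fun q : ℝ => (q : ℂ) ^ 2 - 1) (nhdsWithin 0 (Set.Ioo 0 1))
      (nhds (-1)) := by
    simpa using (hq0.pow 2).sub_const 1
  -- With overlap `e + 1` one power of `q` cancels, and the relation passes to the limit.
  have hlim : ∀ i k j l, i ∈ Finset.Icc 1 (n+1) → k ∈ Finset.Icc 1 (n+1) →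
      j ∈ Finset.Icc 1 (n+1) → l ∈ Finset.Icc 1 (n+1) → i < k → j < l →
      ∀ e, min k l - max i j = e + 1 →
      Z i j * Z k l - Z k l * Z i j = ((0 : ℂ) ^ e) • (Z i l * Z k j) := by
    intro i k j l hi hk hj hl hik hjl e he
    have hcoef : Tendsto (fun q : ℝ => -((q : ℂ) ^ 2 - 1) * (-(q : ℂ)) ^ e)
        (nhdsWithin 0 (Set.Ioo 0 1)) (nhds (0 ^ e)) := by
      simpa using hone.neg.mul (hq0.neg.pow e)
    refine tendsto_nhds_unique_of_eventuallyEq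
      (((hZ i j hi hj).mul (hZ k l hk hl)).sub ((hZ k l hk hl).mul (hZ i j hi hj)))
      (hcoef.smul ((hZ i l hi hl).mul (hZ k j hk hj))) ?_
    filter_upwards [hmem] with q hq
    have hqc : (q : ℂ) ≠ 0 := by simpa using hq.1.ne'
    apply smul_right_injective A hqc
    simp only [hcross i k j l hi hk hj hl hik hjl q hq, he, smul_smul]
    congr 1
    ring
  refine ⟨?_, ?_, ?_, ?_, ?_, ?_⟩
  · intro i j l hi hj hl hjl
    exact hzero i j i l hi hj hi hl fun q hq => hY1 q hq i j l hi hj hl hjl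
  · intro i k j hi hk hj hik
    exact hzero i j k j hi hj hk hj fun q hq => hY2 q hq i k j hi hk hj hik
  · intro i k j l hi hk hj hl hik hjl
    refine tendsto_nhds_unique_of_eventuallyEq ((hZ i l hi hl).mul (hZ k j hk hj))
      ((hZ k j hk hj).mul (hZ i l hi hl)) ?_
    filter_upwards [hmem] with q hq
    simp only [smul_mul_smul_comm, hY3 q hq i k j l hi hk hj hl hik hjl]
    rw [mul_comm]
  · intro i k j l hi hk hj hl hik hjl hle
    have hL := hq0.smul
      (((hZ i j hi hj).mul (hZ k l hk hl)).sub ((hZ k l hk hl).mul (hZ i j hi hj)))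
    have hR := hone.smul ((hZ i l hi hl).mul (hZ k j hk hj))
    have h := tendsto_nhds_unique_of_eventuallyEq hL hR (by
      filter_upwards [hmem] with q hq
      simp only [hcross i k j l hi hk hj hl hik hjl q hq, Nat.sub_eq_zero_of_le hle, pow_zero,
        mul_one])
    simpa using h.symm
  · intro i k j l hi hk hj hl hik hjl hlt
    have h := hlim i k j l hi hk hj hl hik hjl (min k l - max i j - 1) (by omega)
    rw [zero_pow (by omega), zero_smul] at h
    exact sub_eq_zero.mp h
  · intro i k j l hi hk hj hl hik hjl heq
    simpa using hlim i k j l hi hk hj hl hik hjl 0 (by omega)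
end

section
/- Let 𝒜 be a unital complex Banach algebra and n ≥ 1. For each q ∈ (0,1), let (Y_{i,j}(q))_{1≤i,j≤n+1} be elements of 𝒜 such that the quantum determinant condition Σ_{σ ∈ S_{n+1}} (−q)^{ℓ(σ)} Y_{1,σ(1)}(q) Y_{2,σ(2)}(q) ⋯ Y_{n+1,σ(n+1)}(q) = 1 holds, where the sum is over all permutations σ of {1,…,n+1} and ℓ(σ) denotes the number of inversions of σ. Assume that for all i, j the rescaled limit Z_{i,j} = lim_{q→0+} (−q)^{min(i−j,0)} Y_{i,j}(q) exists in norm. Then Z_{1,1} Z_{2,2} ⋯ Z_{n+1,n+1} = 1. -/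
/-!
Write `W i j q = rescale i j q • Y q i j`; then `Y q i j = (-q) ^ (j - i) • W i j q` with truncated
subtraction `j - i` (`eq_pow_smul_rescale_smul`). The `σ`-summand of the quantum determinant is
then `(-q) ^ (ℓ(σ) + excess σ)` times the ordered product of the `W m (σ m) q`, which converges to
the product of the `Z m (σ m)`. A non-identity permutation moves some index up, so `excess σ > 0`
(`excess_pos`) and its summand tends to `0`; for the identity the exponent vanishes and the
summand tends to `Z 1 1 ⋯ Z (n+1) (n+1)`. The determinant is constantly `1`, so uniqueness of limits
concludes.
-/

open Filter

/-- The number of inversions of a permutation of `Fin m`. -/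
def inversions {m : ℕ} (σ : Equiv.Perm (Fin m)) : ℕ :=
  (Finset.univ.filter (fun p : Fin m × Fin m => p.1 < p.2 ∧ σ p.2 < σ p.1)).card

/-- The total upward displacement `∑ max (σ m - m) 0`; the subtraction of naturals truncates. -/
def excess {k : ℕ} (σ : Equiv.Perm (Fin k)) : ℕ := ∑ m, ((σ m).val - m.val)

lemma excess_pos {k : ℕ} {σ : Equiv.Perm (Fin k)} (h : σ ≠ 1) : 0 < excess σ := by
  contrapose! h
  have h0 : ∀ m, σ m ≤ m := fun m => by
    have := (Finset.sum_eq_zero_iff.mp (Nat.le_zero.mp h)) m (Finset.mem_univ m)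
    exact Fin.le_def.mpr (Nat.sub_eq_zero_iff_le.mp this)
  -- The sum of all values is invariant under `σ`, so no index can move down.
  have hs : ∑ m, (σ m).val = ∑ m : Fin k, m.val := Equiv.sum_comp σ (fun m => m.val)
  have he := (Finset.sum_eq_sum_iff_of_le (fun m _ => Fin.le_def.mp (h0 m))).mp hs
  ext m
  simpa using he m (Finset.mem_univ m)

lemma excess_one {k : ℕ} : excess (1 : Equiv.Perm (Fin k)) = 0 := by
  simp [excess]

lemma inversions_one {k : ℕ} : inversions (1 : Equiv.Perm (Fin k)) = 0 := by
  simp only [inversions, Finset.card_eq_zero, Finset.filter_eq_empty_iff]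
  rintro p - ⟨h1, h2⟩
  exact lt_asymm h1 h2

lemma prod_ofFn_smul {A : Type*} [Ring A] [Algebra ℂ A] :
    ∀ {k : ℕ} (c : Fin k → ℂ) (f : Fin k → A),
      (List.ofFn fun m => c m • f m).prod = (∏ m, c m) • (List.ofFn f).prod
  | 0, _, _ => by simp
  | k + 1, c, f => by
    rw [List.ofFn_succ, List.prod_cons, prod_ofFn_smul, List.ofFn_succ, List.prod_cons,
      Fin.prod_univ_succ, smul_mul_smul_comm]

lemma tendsto_prod_ofFn {A X : Type*} [NormedRing A] {l : Filter X} :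
    ∀ {k : ℕ} {f : X → Fin k → A} {a : Fin k → A},
      (∀ m, Tendsto (fun x => f x m) l (nhds (a m))) →
      Tendsto (fun x => (List.ofFn (f x)).prod) l (nhds (List.ofFn a).prod)
  | 0, _, _, _ => by simpa using tendsto_const_nhds
  | k + 1, f, a, h => by
    simp only [List.ofFn_succ, List.prod_cons]
    exact (h 0).mul (tendsto_prod_ofFn fun m => h m.succ)

lemma eq_pow_smul_rescale_smul {A : Type*} [Ring A] [Algebra ℂ A] {q : ℝ} (hq : q ≠ 0)
    (i j : ℕ) (y : A) : y = (-(q : ℂ)) ^ (j - i) • (rescale i j q • y) := by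
  have hq' : -(q : ℂ) ≠ 0 := by simpa using hq
  have he : ((j - i : ℕ) : ℤ) + min ((i : ℤ) - j) 0 = 0 := by omega
  rw [smul_smul, rescale, ← zpow_natCast, ← zpow_add₀ hq', he, zpow_zero, one_smul]

/-- if the quantum determinant condition
`∑_{σ ∈ S_{n+1}} (−q)^{ℓ(σ)} Y_{1,σ(1)}(q) ⋯ Y_{n+1,σ(n+1)}(q) = 1` holds for all
`q ∈ (0,1)`, and all rescaled limits `Z_{i,j}` exist, then `Z_{1,1} Z_{2,2} ⋯ Z_{n+1,n+1} = 1`. -/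
theorem rescaled_limit_quantum_determinant
    {A : Type*} [NormedRing A] [NormedAlgebra ℂ A] [CompleteSpace A]
    (n : ℕ) (hn : 1 ≤ n)
    (Y : ℝ → ℕ → ℕ → A) (Z : ℕ → ℕ → A)
    (hdet : ∀ q ∈ Set.Ioo (0:ℝ) 1,
      ∑ σ : Equiv.Perm (Fin (n+1)),
        ((-(q : ℂ)) ^ (inversions σ)) •
          (List.ofFn (fun m : Fin (n+1) => Y q (m.val + 1) ((σ m).val + 1))).prod = 1)
    (hZ : ∀ i j, i ∈ Finset.Icc 1 (n+1) → j ∈ Finset.Icc 1 (n+1) →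
      Tendsto (fun q : ℝ => rescale i j q • Y q i j)
        (nhdsWithin 0 (Set.Ioo 0 1)) (nhds (Z i j))) :
    (List.ofFn (fun m : Fin (n+1) => Z (m.val + 1) (m.val + 1))).prod = 1 := by
  have : (nhdsWithin (0 : ℝ) (Set.Ioo 0 1)).NeBot := left_nhdsWithin_Ioo_neBot one_pos
  have hq0 : Tendsto (fun q : ℝ => -(q : ℂ)) (nhdsWithin 0 (Set.Ioo 0 1)) (nhds 0) := by
    have hc : Continuous fun q : ℝ => -(q : ℂ) := by fun_prop
    simpa using (hc.tendsto 0).mono_left nhdsWithin_le_nhds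
  have hW (σ : Equiv.Perm (Fin (n+1))) :
      Tendsto (fun q : ℝ => (List.ofFn fun m : Fin (n+1) =>
          rescale (m.val + 1) ((σ m).val + 1) q • Y q (m.val + 1) ((σ m).val + 1)).prod)
        (nhdsWithin 0 (Set.Ioo 0 1))
        (nhds (List.ofFn fun m : Fin (n+1) => Z (m.val + 1) ((σ m).val + 1)).prod) :=
    tendsto_prod_ofFn fun m => hZ _ _ (by simp; omega) (by simp; omega)
  have hterm (σ : Equiv.Perm (Fin (n+1))) :
      Tendsto (fun q : ℝ => (-(q : ℂ)) ^ (inversions σ + excess σ) •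
          (List.ofFn fun m : Fin (n+1) =>
            rescale (m.val + 1) ((σ m).val + 1) q • Y q (m.val + 1) ((σ m).val + 1)).prod)
        (nhdsWithin 0 (Set.Ioo 0 1))
        (nhds (if σ = 1 then (List.ofFn fun m : Fin (n+1) => Z (m.val + 1) (m.val + 1)).prod
          else 0)) := by
    split_ifs with h
    · subst h
      simpa [excess_one, inversions_one] using hW 1
    · have hne : inversions σ + excess σ ≠ 0 := by have := excess_pos h; omega
      have ht := (hq0.pow (inversions σ + excess σ)).smul (hW σ)
      rwa [zero_pow hne, zero_smul] at ht
  have hsum := tendsto_finsetSum Finset.univ fun σ _ => hterm σ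
  rw [Finset.sum_ite_eq' Finset.univ 1, if_pos (Finset.mem_univ _)] at hsum
  refine tendsto_nhds_unique hsum (tendsto_const_nhds.congr' ?_)
  filter_upwards [self_mem_nhdsWithin] with q hq
  rw [← hdet q hq]
  refine Finset.sum_congr rfl fun σ _ => ?_
  rw [pow_add, mul_smul, excess, ← Finset.prod_pow_eq_pow_sum, ← prod_ofFn_smul]
  congr 3
  funext m
  simpa only [Nat.add_sub_add_right] using
    eq_pow_smul_rescale_smul hq.1.ne' (m.val + 1) ((σ m).val + 1) _
end

section
/- Fix n ≥ 1 and 1 ≤ k ≤ n. Define bounded operators z_{i,j} on ℓ²(ℕ) for 1 ≤ i, j ≤ n+1 by: z_{k,k} = S, z_{k+1,k+1} = S*, z_{k,k+1} = P₀, z_{k+1,k} = P₀, z_{i,i} = I for i ∉ {k, k+1}, and z_{i,j} = 0 for all remaining pairs with i ≠ j. Then this family satisfies the A_n(0) relations. -/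
/-!
With `S` the left shift, `S S* = 1` and `S* S = 1 - P₀`. These two identities are the only
operator-theoretic input: in any *-ring they force `P₀` to be a self-adjoint idempotent with
`S P₀ = 0` and `P₀ S* = 0`.

Given that, `(z_{i,j})` is the identity matrix with the block `S, P₀; P₀, S*` placed at the indices
`k, k+1`. The quadratic relations reduce to products inside this block, every other entry being
`0` or `1`; the only nonzero commutator to check is `S S* - S* S = P₀ = P₀ P₀`. A product of consecutive diagonal entries equals `1`, `S`, `S*` or
`S S* = 1` according to which of `k, k+1` it meets, and a product of consecutive off-diagonal
entries vanishes unless it is the single factor `P₀`; this gives the determinant and adjoint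
relations.
-/

/-- `i` is a valid index, i.e. `1 ≤ i ≤ n+1`. -/
def Idx (n i : ℕ) : Prop := 1 ≤ i ∧ i ≤ n + 1

/-- The `A_n(0)` relations (R1)–(R9) for a family `(z_{i,j})_{1≤i,j≤n+1}` in a
unital *-ring. -/
structure AnRel {A : Type*} [Ring A] [StarRing A] (n : ℕ) (z : ℕ → ℕ → A) : Prop where
  r1 : ∀ i j l, Idx n i → Idx n j → Idx n l → j < l → z i j * z i l = 0
  r2 : ∀ i k j, Idx n i → Idx n k → Idx n j → i < k → z i j * z k j = 0
  r3 : ∀ i k j l, Idx n i → Idx n k → Idx n j → Idx n l → i < k → j < l →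
    z i l * z k j = z k j * z i l
  r4 : ∀ i k j l, Idx n i → Idx n k → Idx n j → Idx n l → i < k → j < l →
    min k l ≤ max i j → z i l * z k j = 0
  r5 : ∀ i k j l, Idx n i → Idx n k → Idx n j → Idx n l → i < k → j < l →
    max i j + 1 < min k l → z i j * z k l = z k l * z i j
  r6 : ∀ i k j l, Idx n i → Idx n k → Idx n j → Idx n l → i < k → j < l →
    max i j + 1 = min k l → z i j * z k l - z k l * z i j = z i l * z k j
  r7 : ((List.range (n + 1)).map (fun m => z (m + 1) (m + 1))).prod = 1
  r8_gt : ∀ r s, Idx n r → Idx n s → s < r →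
    star (z r s) =
      ((List.range (s - 1)).map (fun m => z (m + 1) (m + 1))).prod *
      ((List.range (r - s)).map (fun m => z (s + m) (s + m + 1))).prod *
      ((List.range (n + 1 - r)).map (fun m => z (r + 1 + m) (r + 1 + m))).prod
  r8_lt : ∀ r s, Idx n r → Idx n s → r < s →
    star (z r s) =
      ((List.range (r - 1)).map (fun m => z (m + 1) (m + 1))).prod *
      ((List.range (s - r)).map (fun m => z (r + 1 + m) (r + m))).prod *
      ((List.range (n + 1 - s)).map (fun m => z (s + 1 + m) (s + 1 + m))).prod
  r8_eq : ∀ r, Idx n r →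
    star (z r r) =
      ((List.range (r - 1)).map (fun m => z (m + 1) (m + 1))).prod *
      ((List.range (n + 1 - r)).map (fun m => z (r + 1 + m) (r + 1 + m))).prod
  r9 : ∀ i j r s, Idx n i → Idx n j → Idx n r → Idx n s → i ≠ r → j ≠ s →
    star (z i j) * z r s = z r s * star (z i j)

/-- `ℓ²(ℕ)`. -/
noncomputable abbrev lpN : Type := lp (fun _ : ℕ => ℂ) 2

/-- The standard orthonormal basis `(e_m)` of `ℓ²(ℕ)`. -/
noncomputable def eN (m : ℕ) : lpN := lp.single 2 m 1

/-- A bounded operator on `ℓ²(ℕ)` is determined by its values on the standard basis. -/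
theorem clm_ext_eN {T U : lpN →L[ℂ] lpN} (h : ∀ m, T (eN m) = U (eN m)) : T = U := by
  ext1 f
  have hf := lp.hasSum_single (p := 2) (by simp) f
  have key : ∀ m, (lp.single 2 m (f m) : lpN) = f m • eN m := by
    intro m
    rw [eN, ← lp.single_smul]
    simp
  have h1 := hf.mapL T
  have h2 := hf.mapL U
  simp only [key, map_smul, h] at h1 h2
  exact h1.unique h2

theorem inner_eN (m : ℕ) (f : lpN) : inner ℂ (eN m) f = f m := by
  rw [eN, lp.inner_single_left]
  simp

theorem eN_apply (m j : ℕ) : (eN m : lpN) j = if j = m then 1 else 0 := by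
  rw [eN, lp.single_apply]
  split_ifs with h
  · subst h; simp
  · simp [h]

/-- The adjoint of the left shift is the right shift. -/
theorem star_shift_eN {S : lpN →L[ℂ] lpN} (hS0 : S (eN 0) = 0)
    (hS : ∀ m, S (eN (m + 1)) = eN m) (m : ℕ) : star S (eN m) = eN (m + 1) := by
  ext j
  rw [← inner_eN, ContinuousLinearMap.star_eq_adjoint, ContinuousLinearMap.adjoint_inner_right,
    eN_apply]
  cases j with
  | zero => simp [hS0]
  | succ j => simp [hS, inner_eN, eN_apply]

/-- The product of the entries `w_s, …, w_{s+len-1}` of an off-diagonal line. As only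
`w_k` can be nonzero, it vanishes unless it is the single factor `w_k`. -/
theorem prod_offdiag {A : Type*} [Ring A] {k : ℕ} {P : A} {w : ℕ → A}
    (hw : ∀ i, w i = if i = k then P else 0) {s len : ℕ} (hlen : 0 < len) :
    ((List.range len).map (fun m => w (s + m))).prod = if s = k ∧ len = 1 then P else 0 := by
  split_ifs with h
  · obtain ⟨rfl, rfl⟩ := h
    simp [List.range_succ, hw]
  · by_cases hs : s = k
    · -- the second factor is `w_{k+1} = 0`
      have h2 : 2 ≤ len := by omega
      obtain ⟨l, rfl⟩ := Nat.exists_eq_add_of_le h2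
      subst hs
      simp [List.range_add, List.range_succ, hw]
    · obtain ⟨l, rfl⟩ := Nat.exists_eq_add_of_le' hlen
      simp [List.range_succ_eq_map, hw, hs]

section Algebra

variable {A : Type*} [Ring A] [StarRing A] {k : ℕ} {S P : A} {z : ℕ → ℕ → A}

/-- The family of the theorem, over an arbitrary *-ring: the identity matrix with the block
`S, P; P, S*` at the indices `k, k+1`. -/
def IsBlockFamily (k : ℕ) (S P : A) (z : ℕ → ℕ → A) : Prop :=
  ∀ i j, z i j =
      if i = k ∧ j = k then S
      else if i = k + 1 ∧ j = k + 1 then star S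
      else if i = k ∧ j = k + 1 then P
      else if i = k + 1 ∧ j = k then P
      else if i = j then 1 else 0

theorem IsBlockFamily.cases (hz : IsBlockFamily k S P z) (i j : ℕ) :
    ((i = k ∧ j = k) ∧ z i j = S) ∨ ((i = k + 1 ∧ j = k + 1) ∧ z i j = star S) ∨
    ((i = k ∧ j = k + 1) ∧ z i j = P) ∨ ((i = k + 1 ∧ j = k) ∧ z i j = P) ∨
    ((i = j ∧ i ≠ k ∧ i ≠ k + 1) ∧ z i j = 1) ∨
    ((i ≠ j ∧ ¬ (i = k ∧ j = k + 1) ∧ ¬ (i = k + 1 ∧ j = k)) ∧ z i j = 0) := by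
  rw [hz i j]
  split_ifs <;> grind

/-- The product of the `len` consecutive diagonal entries starting at index `a`. -/
theorem IsBlockFamily.prod_diag (hz : IsBlockFamily k S P z) (a len : ℕ) :
    ((List.range len).map (fun m => z (a + m) (a + m))).prod =
      (if a ≤ k ∧ k < a + len then S else 1) *
      (if a ≤ k + 1 ∧ k + 1 < a + len then star S else 1) := by
  induction len with
  | zero =>
    rw [if_neg (by omega), if_neg (by omega)]
    simp
  | succ len ih =>
    rw [List.range_succ, List.map_append, List.prod_append, ih]
    simp only [List.map_cons, List.map_nil, List.prod_cons, List.prod_nil, mul_one]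
    rcases hz.cases (a + len) (a + len) with h | h | h | h | h | h
    · rw [h.2, if_neg (by omega), if_neg (by omega), if_pos (by omega), if_neg (by omega)]
      simp
    · rw [h.2, if_neg (c := a ≤ k + 1 ∧ k + 1 < a + len) (by omega),
        if_pos (c := a ≤ k + 1 ∧ k + 1 < a + (len + 1)) (by omega), mul_one]
      congr 1
      exact if_congr (by omega) rfl rfl
    · omega
    · omega
    · rw [h.2, mul_one]
      congr 1 <;> exact if_congr (by omega) rfl rfl
    · omega

theorem IsBlockFamily.prod_diag_one (hz : IsBlockFamily k S P z) (len : ℕ) :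
    ((List.range len).map (fun m => z (m + 1) (m + 1))).prod =
      (if 1 ≤ k ∧ k < 1 + len then S else 1) *
      (if 1 ≤ k + 1 ∧ k + 1 < 1 + len then star S else 1) := by
  rw [← hz.prod_diag]
  simp only [add_comm 1]

theorem IsBlockFamily.anRel {n : ℕ} (hz : IsBlockFamily k S P z) (hk1 : 1 ≤ k) (hkn : k ≤ n)
    (hSS : S * star S = 1) (hP : star S * S = 1 - P) : AnRel n z := by
  have hP' : P = 1 - star S * S := by rw [hP]; abel
  have hSP : S * P = 0 := by rw [hP', mul_sub, ← mul_assoc, hSS]; simp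
  have hPS : P * star S = 0 := by rw [hP', sub_mul, mul_assoc, hSS]; simp
  have hPP : P * P = P := by
    nth_rw 1 [hP']
    rw [sub_mul, mul_assoc, hSP]; simp
  have hPstar : star P = P := by rw [hP']; simp
  have hup : ∀ i, z i (i + 1) = if i = k then P else 0 := by
    intro i; rw [hz]; grind
  have hdown : ∀ i, z (i + 1) i = if i = k then P else 0 := by
    intro i; rw [hz]; grind
  -- opposite corners `(i, l)`, `(k', j)` of a 2 × 2 minor have zero product,
  -- except those of the block
  have hanti : ∀ i k' j l, i < k' → j < l →
      (i = k ∧ l = k + 1 ∧ k' = k + 1 ∧ j = k ∧ z i l = P ∧ z k' j = P) ∨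
      (¬ (i = k ∧ l = k + 1 ∧ k' = k + 1 ∧ j = k) ∧ z i l * z k' j = 0 ∧ z k' j * z i l = 0) := by
    intro i k' j l h1 h2
    rcases hz.cases i l with h | h | h | h | h | h <;>
    rcases hz.cases k' j with h' | h' | h' | h' | h' | h' <;>
    first
      | omega
      | exact Or.inl ⟨h.1.1, h.1.2, h'.1.1, h'.1.2, h.2, h'.2⟩
      | (right; refine ⟨by omega, ?_, ?_⟩ <;> simp [h.2, h'.2])
  constructor
  · intro i j l _ _ _ hjl
    rcases hz.cases i j with h | h | h | h | h | h <;>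
    rcases hz.cases i l with h' | h' | h' | h' | h' | h' <;>
    first
      | omega
      | simp [h.2, h'.2, hSP, hPS]
  · intro i k' j _ _ _ hjl
    rcases hz.cases i j with h | h | h | h | h | h <;>
    rcases hz.cases k' j with h' | h' | h' | h' | h' | h' <;>
    first
      | omega
      | simp [h.2, h'.2, hSP, hPS]
  · intro i k' j l _ _ _ _ h1 h2
    rcases hanti i k' j l h1 h2 with h | h
    · rw [h.2.2.2.2.1, h.2.2.2.2.2]
    · rw [h.2.1, h.2.2]
  · intro i k' j l _ _ _ _ h1 h2 h3
    rcases hanti i k' j l h1 h2 with h | h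
    · omega
    · exact h.2.1
  · intro i k' j l _ _ _ _ h1 h2 h3
    rcases hz.cases i j with h | h | h | h | h | h <;>
    rcases hz.cases k' l with h' | h' | h' | h' | h' | h' <;>
    first
      | omega
      | simp [h.2, h'.2]
  · intro i k' j l _ _ _ _ h1 h2 h3
    rcases hanti i k' j l h1 h2 with ⟨hi, hl, hk', hj, e1, e2⟩ | ⟨hne, h0, -⟩
    · have e3 : z i j = S := by rw [hz]; simp [hi, hj]
      have e4 : z k' l = star S := by rw [hz]; simp [hk', hl]
      rw [e1, e2, e3, e4, hSS, hP, hPP]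
      abel
    · rw [h0]
      rcases hz.cases i j with h | h | h | h | h | h <;>
      rcases hz.cases k' l with h' | h' | h' | h' | h' | h' <;>
      first
        | omega
        | simp [h.2, h'.2]
  · rw [hz.prod_diag_one, if_pos (by omega), if_pos (by omega), hSS]
  · intro r s hr hs hsr
    unfold Idx at hr hs
    rw [hz.prod_diag_one, hz.prod_diag, prod_offdiag (w := fun i => z i (i + 1)) hup (by omega)]
    by_cases h : s = k ∧ r - s = 1
    · have e : z r s = P := by rw [hz]; grind
      rw [if_pos h, e, hPstar]
      repeat rw [if_neg (by omega)]
      simp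
    · have e : z r s = 0 := by rw [hz]; grind
      rw [if_neg h, e]
      simp
  · intro r s hr hs hsr
    unfold Idx at hr hs
    have : (fun m => z (r + 1 + m) (r + m)) = fun m => (fun i => z (i + 1) i) (r + m) := by
      funext m; simp only [add_right_comm]
    rw [hz.prod_diag_one, hz.prod_diag, this, prod_offdiag hdown (by omega)]
    by_cases h : r = k ∧ s - r = 1
    · have e : z r s = P := by rw [hz]; grind
      rw [if_pos h, e, hPstar]
      repeat rw [if_neg (by omega)]
      simp
    · have e : z r s = 0 := by rw [hz]; grind
      rw [if_neg h, e]
      simp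
  · intro r hr
    unfold Idx at hr
    rw [hz.prod_diag_one, hz.prod_diag]
    rcases lt_trichotomy r k with h | rfl | h
    · have e : z r r = 1 := by rw [hz]; grind
      rw [e, if_neg (by omega), if_neg (by omega), if_pos (by omega), if_pos (by omega), hSS]
      simp
    · have e : z r r = S := by rw [hz]; simp
      rw [e, if_neg (by omega), if_neg (by omega), if_neg (by omega), if_pos (by omega)]
      simp
    · rcases eq_or_ne r (k + 1) with rfl | h'
      · have e : z (k + 1) (k + 1) = star S := by rw [hz]; simp
        rw [e, if_pos (by omega), if_neg (by omega), if_neg (by omega), if_neg (by omega)]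
        simp
      · have e : z r r = 1 := by rw [hz]; grind
        rw [e, if_pos (by omega), if_pos (by omega), if_neg (by omega), if_neg (by omega), hSS]
        simp
  · intro i j r s _ _ _ _ h1 h2
    rcases hz.cases i j with h | h | h | h | h | h <;>
    rcases hz.cases r s with h' | h' | h' | h' | h' | h' <;>
    first
      | omega
      | simp [h.2, h'.2, hPstar]

end Algebra

/-- for `1 ≤ k ≤ n`, the family on `ℓ²(ℕ)` given by `z_{k,k} = S`,
`z_{k+1,k+1} = S*`, `z_{k,k+1} = z_{k+1,k} = P₀`, `z_{i,i} = I` for `i ∉ {k,k+1}` and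
`z_{i,j} = 0` for the remaining `i ≠ j`, satisfies the `A_n(0)` relations. Here `S` is
the left shift and `P₀` the orthogonal projection onto `ℂe₀`, determined by their actions
on the standard orthonormal basis. -/
theorem shift_family_satisfies_An0_relations
    (n k : ℕ) (hk1 : 1 ≤ k) (hkn : k ≤ n)
    (S P₀ : lpN →L[ℂ] lpN)
    (hS0 : S (eN 0) = 0) (hS : ∀ m, S (eN (m + 1)) = eN m)
    (hP₀0 : P₀ (eN 0) = eN 0) (hP₀ : ∀ m, P₀ (eN (m + 1)) = 0)
    (z : ℕ → ℕ → (lpN →L[ℂ] lpN))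
    (hz : ∀ i j, z i j =
      if i = k ∧ j = k then S
      else if i = k + 1 ∧ j = k + 1 then star S
      else if i = k ∧ j = k + 1 then P₀
      else if i = k + 1 ∧ j = k then P₀
      else if i = j then 1 else 0) :
    AnRel n z := by
  have hstar := star_shift_eN hS0 hS
  have hz' : IsBlockFamily k S P₀ z := hz
  refine hz'.anRel hk1 hkn (clm_ext_eN fun m => ?_) (clm_ext_eN fun m => ?_)
  · simp [hstar, hS]
  · cases m with
    | zero => simp [hS0, hP₀0]
    | succ m => simp [hS, hstar, hP₀]
end

section
/- Let A be a unital C*-algebra, n ≥ 1, and let (z_{i,j})_{1≤i,j≤n+1} be a family in A satisfying the A_n(0) relations. Then for every j with 1 ≤ j ≤ n+1 one has Σ_{k=1}^{j} z_{j,k} z_{j,k}* = 1 and Σ_{k=j}^{n+1} z_{k,j}* z_{k,j} = 1; consequently ‖z_{i,j}‖ ≤ 1 for all 1 ≤ i, j ≤ n+1. -/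
/-- The product `z_{a,a} z_{a+1,a+1} ⋯` of `L` consecutive diagonal entries. -/
def diagProd {A : Type*} [Ring A] (z : ℕ → ℕ → A) (a L : ℕ) : A :=
  ((List.range L).map (fun m => z (a + m) (a + m))).prod

/-- The product `z_{a,a+1} z_{a+1,a+2} ⋯` of `L` consecutive superdiagonal entries. -/
def superProd {A : Type*} [Ring A] (z : ℕ → ℕ → A) (a L : ℕ) : A :=
  ((List.range L).map (fun m => z (a + m) (a + m + 1))).prod

section Products

variable {A : Type*} [Ring A] (z : ℕ → ℕ → A)

@[simp] lemma diagProd_zero (a : ℕ) : diagProd z a 0 = 1 := by simp [diagProd]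

@[simp] lemma superProd_zero (a : ℕ) : superProd z a 0 = 1 := by simp [superProd]

lemma diagProd_succ (a L : ℕ) :
    diagProd z a (L + 1) = diagProd z a L * z (a + L) (a + L) := by
  simp [diagProd, List.range_succ]

lemma superProd_succ (a L : ℕ) :
    superProd z a (L + 1) = superProd z a L * z (a + L) (a + L + 1) := by
  simp [superProd, List.range_succ]

lemma diagProd_succ' (a L : ℕ) :
    diagProd z a (L + 1) = z a a * diagProd z (a + 1) L := by
  simp [diagProd, List.range_succ_eq_map, Function.comp_def, Nat.add_comm, Nat.add_left_comm]

lemma superProd_succ' (a L : ℕ) :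
    superProd z a (L + 1) = z a (a + 1) * superProd z (a + 1) L := by
  simp [superProd, List.range_succ_eq_map, Function.comp_def, Nat.add_comm, Nat.add_left_comm]

lemma diagProd_add (a L M : ℕ) :
    diagProd z a (L + M) = diagProd z a L * diagProd z (a + L) M := by
  simp [diagProd, List.range_add, Function.comp_def, Nat.add_assoc]

end Products

namespace AnRel

section Ring

variable {A : Type*} [Ring A] [StarRing A] {n : ℕ} {z : ℕ → ℕ → A}

lemma diagProd_eq_one (h : AnRel n z) : diagProd z 1 (n + 1) = 1 := by
  simpa [diagProd, Nat.add_comm] using h.r7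

/-- (R8) on and below the diagonal, in a single formula. -/
lemma star_lower (h : AnRel n z) {r s : ℕ} (hr : Idx n r) (hs : Idx n s) (hsr : s ≤ r) :
    star (z r s) =
      diagProd z 1 (s - 1) * superProd z s (r - s) * diagProd z (r + 1) (n + 1 - r) := by
  rcases hsr.eq_or_lt with rfl | hlt
  · simpa [diagProd, superProd, Nat.add_comm 1] using h.r8_eq s hr
  · simpa [diagProd, superProd, Nat.add_comm 1] using h.r8_gt r s hr hs hlt

lemma diagProd_comm_row (h : AnRel n z) {j l : ℕ} (hj : Idx n j) (hl : l ≤ j) (k : ℕ)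
    (hk : k + 1 < l) : diagProd z 1 k * z j l = z j l * diagProd z 1 k := by
  unfold Idx at hj
  induction k with
  | zero => simp
  | succ k ih =>
    have h5 : z (1 + k) (1 + k) * z j l = z j l * z (1 + k) (1 + k) :=
      h.r5 _ _ _ _ (by unfold Idx; omega) (by unfold Idx; omega) (by unfold Idx; omega)
        (by unfold Idx; omega) (by omega) (by omega) (by omega)
    rw [diagProd_succ, mul_assoc, h5, ← mul_assoc, ih (by omega), mul_assoc]

/-- Expansion along row `j`: moving `z_{j,k+1}` to the left through `z_{1,1} ⋯ z_{k,k}`. -/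
lemma row_expansion (h : AnRel n z) {j : ℕ} (hj : Idx n j) (k : ℕ) (hk : k + 1 ≤ j) :
    diagProd z 1 k * z j (k + 1) =
      ∑ m ∈ Finset.range (k + 1), z j (m + 1) * (diagProd z 1 m * superProd z (m + 1) (k - m)) := by
  unfold Idx at hj
  induction k with
  | zero => simp
  | succ k ih =>
    have h6 : z (k + 1) (k + 1) * z j (k + 2) =
        z j (k + 2) * z (k + 1) (k + 1) + z (k + 1) (k + 2) * z j (k + 1) :=
      sub_eq_iff_eq_add'.mp <|
        h.r6 _ _ _ _ (by unfold Idx; omega) (by unfold Idx; omega) (by unfold Idx; omega)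
          (by unfold Idx; omega) (by omega) (by omega) (by omega)
    have h3 : z (k + 1) (k + 2) * z j (k + 1) = z j (k + 1) * z (k + 1) (k + 2) :=
      h.r3 _ _ _ _ (by unfold Idx; omega) (by unfold Idx; omega) (by unfold Idx; omega)
        (by unfold Idx; omega) (by omega) (by omega)
    have hc := h.diagProd_comm_row hj hk k (by omega)
    have hsum : ∑ m ∈ Finset.range (k + 1),
          z j (m + 1) * (diagProd z 1 m * superProd z (m + 1) (k + 1 - m)) =
        (diagProd z 1 k * z j (k + 1)) * z (k + 1) (k + 2) := by
      rw [ih (by omega), Finset.sum_mul]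
      refine Finset.sum_congr rfl fun m hm => ?_
      have hm' : m ≤ k := by simpa [Nat.lt_succ_iff] using hm
      rw [show k + 1 - m = (k - m) + 1 by omega, superProd_succ,
        show m + 1 + (k - m) = k + 1 by omega]
      simp only [mul_assoc]
    rw [Finset.sum_range_succ, hsum, Nat.sub_self, superProd_zero, mul_one, diagProd_succ,
      Nat.add_comm 1 k, mul_assoc, h6, h3, mul_add, ← mul_assoc, hc, mul_assoc, ← mul_assoc,
      add_comm]
    simp only [mul_assoc]

lemma diagProd_comm_col (h : AnRel n z) {k j : ℕ} (hj : Idx n j) (hk : j ≤ k) (L : ℕ) :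
    ∀ a, k + 1 < a → a + L ≤ n + 2 → diagProd z a L * z k j = z k j * diagProd z a L := by
  unfold Idx at hj
  induction L with
  | zero => simp
  | succ L ih =>
    intro a ha haL
    have h5 : z k j * z a a = z a a * z k j :=
      h.r5 _ _ _ _ (by unfold Idx; omega) (by unfold Idx; omega) (by unfold Idx; omega)
        (by unfold Idx; omega) (by omega) (by omega) (by omega)
    rw [diagProd_succ', mul_assoc, ih _ (by omega) (by omega), ← mul_assoc, ← h5, mul_assoc]

/-- Expansion along column `j`: moving `z_{k,j}` to the right through
`z_{k+1,k+1} ⋯ z_{k+L,k+L}`. -/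
lemma col_expansion (h : AnRel n z) {j : ℕ} (hj : Idx n j) (L : ℕ) :
    ∀ k, j ≤ k → k + L ≤ n + 1 → z k j * diagProd z (k + 1) L =
      ∑ m ∈ Finset.range (L + 1),
        superProd z k m * diagProd z (k + m + 1) (L - m) * z (k + m) j := by
  unfold Idx at hj
  induction L with
  | zero => simp
  | succ L ih =>
    intro k hk hkL
    have h6 : z k j * z (k + 1) (k + 1) =
        z (k + 1) (k + 1) * z k j + z k (k + 1) * z (k + 1) j :=
      sub_eq_iff_eq_add'.mp <|
        h.r6 _ _ _ _ (by unfold Idx; omega) (by unfold Idx; omega) (by unfold Idx; omega)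
          (by unfold Idx; omega) (by omega) (by omega) (by omega)
    have hc := h.diagProd_comm_col hj hk L (k + 2) (by omega) (by omega)
    have hsum : ∑ m ∈ Finset.range (L + 1),
          superProd z k (m + 1) * diagProd z (k + (m + 1) + 1) (L + 1 - (m + 1)) *
            z (k + (m + 1)) j =
        z k (k + 1) * (z (k + 1) j * diagProd z (k + 2) L) := by
      rw [ih (k + 1) (by omega) (by omega), Finset.mul_sum]
      refine Finset.sum_congr rfl fun m _ => ?_
      rw [superProd_succ', show k + (m + 1) = k + 1 + m by omega,
        show L + 1 - (m + 1) = L - m by omega]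
      simp only [mul_assoc]
    rw [Finset.sum_range_succ', hsum, diagProd_succ', ← mul_assoc, h6, add_mul, mul_assoc, ← hc,
      add_comm]
    simp [diagProd_succ', mul_assoc]

lemma row_sum (h : AnRel n z) {j : ℕ} (hj : Idx n j) :
    ∑ k ∈ Finset.Icc 1 j, z j k * star (z j k) = 1 := by
  have hj' := hj
  unfold Idx at hj'
  obtain ⟨i, rfl⟩ : ∃ i, j = i + 1 := ⟨j - 1, by omega⟩
  have hsplit : diagProd z 1 i * z (i + 1) (i + 1) * diagProd z (i + 1 + 1) (n + 1 - (i + 1)) =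
      1 := by
    rw [← h.diagProd_eq_one, show n + 1 = (i + 1) + (n + 1 - (i + 1)) by omega, diagProd_add,
      diagProd_succ, Nat.add_comm 1 i, Nat.add_comm 1 (i + 1)]
    simp
  rw [← hsplit, h.row_expansion hj i le_rfl, Finset.sum_mul, ← Finset.Ico_add_one_right_eq_Icc,
    Finset.sum_Ico_eq_sum_range]
  refine Finset.sum_congr rfl fun m hm => ?_
  have hm' : m ≤ i := by simpa [Nat.lt_succ_iff] using hm
  rw [Nat.add_comm 1 m, h.star_lower hj (by unfold Idx; omega) (by omega),
    show i + 1 - (m + 1) = i - m by omega, Nat.add_sub_cancel]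
  simp only [mul_assoc]

lemma col_sum (h : AnRel n z) {j : ℕ} (hj : Idx n j) :
    ∑ k ∈ Finset.Icc j (n + 1), star (z k j) * z k j = 1 := by
  have hj' := hj
  unfold Idx at hj'
  have hsplit : diagProd z 1 (j - 1) * (z j j * diagProd z (j + 1) (n + 1 - j)) = 1 := by
    have hadd := diagProd_add z 1 (j - 1) (n + 1 - j + 1)
    rw [show j - 1 + (n + 1 - j + 1) = n + 1 by omega, show 1 + (j - 1) = j by omega,
      h.diagProd_eq_one, diagProd_succ'] at hadd
    exact hadd.symm
  rw [← hsplit, h.col_expansion hj _ j le_rfl (by omega), Finset.mul_sum,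
    ← Finset.Ico_add_one_right_eq_Icc, Finset.sum_Ico_eq_sum_range,
    show n + 1 + 1 - j = n + 1 - j + 1 by omega]
  refine Finset.sum_congr rfl fun m hm => ?_
  have hm' : m < n + 1 - j + 1 := by simpa using hm
  rw [h.star_lower (by unfold Idx; omega) hj (by omega), Nat.add_sub_cancel_left,
    show n + 1 - (j + m) = n + 1 - j - m by omega]
  simp only [mul_assoc]

end Ring

end AnRel

lemma norm_list_prod_le_one {A : Type*} [NormedRing A] (h1 : ‖(1 : A)‖ ≤ 1) (l : List A)
    (hl : ∀ a ∈ l, ‖a‖ ≤ 1) : ‖l.prod‖ ≤ 1 := by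
  induction l with
  | nil => simpa using h1
  | cons a l ih =>
    rw [List.prod_cons]
    exact (norm_mul_le _ _).trans <| mul_le_one₀ (hl a (by simp)) (norm_nonneg _)
      (ih fun b hb => hl b (by simp [hb]))

open scoped CStarAlgebra in
/-- If `∑ a_k a_k* = 1` in a C*-algebra, then `a_k a_k* ≤ 1`, so `‖a_k‖ ≤ 1`. -/
lemma norm_le_one_of_sum_mul_star {A : Type*} [CStarAlgebra A] {s : Finset ℕ} {a : ℕ → A}
    (hs : ∑ k ∈ s, a k * star (a k) = 1) {k : ℕ} (hk : k ∈ s) : ‖a k‖ ≤ 1 := by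
  let := CStarAlgebra.spectralOrder A
  have := CStarAlgebra.spectralOrderedRing A
  have hle : a k * star (a k) ≤ 1 := by
    rw [← hs]
    exact Finset.single_le_sum (f := fun k => a k * star (a k))
      (fun i _ => mul_star_self_nonneg (a i)) hk
  have hn := (CStarAlgebra.norm_le_one_iff_of_nonneg _ (mul_star_self_nonneg (a k))).mpr hle
  rw [CStarRing.norm_self_mul_star] at hn
  nlinarith [norm_nonneg (a k)]

/-- in a unital C*-algebra, if `(z_{i,j})_{1≤i,j≤n+1}` satisfies the
`A_n(0)` relations, then `∑_{k=1}^{j} z_{j,k} z_{j,k}* = 1` and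
`∑_{k=j}^{n+1} z_{k,j}* z_{k,j} = 1` for every `1 ≤ j ≤ n+1`; consequently
`‖z_{i,j}‖ ≤ 1` for all `i, j`. -/
theorem An0_relations_norm_le_one
    {A : Type*} [NormedRing A] [StarRing A] [CStarRing A]
    [NormedAlgebra ℂ A] [StarModule ℂ A] [CompleteSpace A]
    (n : ℕ) (hn : 1 ≤ n) (z : ℕ → ℕ → A) (hrel : AnRel n z) :
    (∀ j, Idx n j →
      (∑ k ∈ Finset.Icc 1 j, z j k * star (z j k) = 1 ∧
       ∑ k ∈ Finset.Icc j (n + 1), star (z k j) * z k j = 1)) ∧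
    (∀ i j, Idx n i → Idx n j → ‖z i j‖ ≤ 1) := by
  refine ⟨fun j hj => ⟨hrel.row_sum hj, hrel.col_sum hj⟩, ?_⟩
  let : CStarAlgebra A := {}
  have hlower : ∀ i j, Idx n i → Idx n j → j ≤ i → ‖z i j‖ ≤ 1 := fun i j hi hj hji =>
    norm_le_one_of_sum_mul_star (hrel.row_sum hi) (Finset.mem_Icc.mpr ⟨hj.1, hji⟩)
  -- The algebra may be trivial, so `‖1‖ = 1` is not available.
  have h1 : ‖(1 : A)‖ ≤ 1 :=
    norm_le_one_of_sum_mul_star (s := {0}) (a := fun _ => (1 : A)) (by simp) (by simp : 0 ∈ _)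
  intro i j hi hj
  rcases le_or_gt j i with hji | hij
  · exact hlower i j hi hj hji
  · unfold Idx at hi hj
    rw [← norm_star, hrel.r8_lt i j hi hj hij, ← List.prod_append, ← List.prod_append]
    refine norm_list_prod_le_one h1 _ fun a ha => ?_
    simp only [List.mem_append, List.mem_map, List.mem_range] at ha
    rcases ha with (⟨m, hm, rfl⟩ | ⟨m, hm, rfl⟩) | ⟨m, hm, rfl⟩ <;>
      exact hlower _ _ (by unfold Idx; omega) (by unfold Idx; omega) (by omega)
end

section
/- Let A be a unital C*-algebra and let (z_{i,j})_{1≤i,j≤3} be a family in A satisfying the A₂(0) relations. Set p_{i,j} = z_{i,j}* z_{i,j} and q_{i,j} = z_{i,j} z_{i,j}* for 1 ≤ j ≤ i ≤ 3. Then each p_{i,j} and each q_{i,j} is a projection (self-adjoint idempotent), and any two elements of the family {p_{i,j}, q_{i,j} : 1 ≤ j ≤ i ≤ 3} commute. -/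
/-!
Every `p_{i,j}` and `q_{i,j}` with `j ≤ i` is an integer linear combination of `1` and the three
elements `a = p₁₁`, `b = p₂₁`, `c = q₃₃`:
* `p₁₁ = q₂₂ = a`, `p₂₁ = b`, `p₂₂ = q₃₃ = c`, `q₁₁ = p₃₃ = 1`,
* `q₂₁ = 1 - a`, `p₃₂ = 1 - c`, `p₃₁ = q₃₁ = 1 - a - b`, `q₃₂ = a + b - c`.

So it is enough to understand `a`, `b`, `c`. They are projections because `z₁₁` and `z₃₃*` are
coisometries and `z₂₁` is a partial isometry (`z₂₁ z₂₁* = 1 - a` and `z₁₁ z₂₁ = 0`). Furthermore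
`a b = 0` since `z₂₁ z₁₁* = z₂₁ z₂₂ z₃₃ = 0`; the elements `a` and `c` commute since `z₁₁` and `z₁₁*`
commute with `z₃₃` and `z₃₃*`; and `c (a + b) = c`, that is `p₂₂ p₃₁ = 0`, because `z₂₂*` commutes
with `z₃₁` while `z₃₁ z₂₂ = 0`. These facts give all the commutations and show that the remaining
combinations, in particular `a + b - c`, are idempotent. The argument is purely algebraic and works
in any star ring.
-/

/-- `i` is a valid index, i.e. `i ∈ {1, 2, 3}`. -/
def Idx3 (i : ℕ) : Prop := 1 ≤ i ∧ i ≤ 3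

/-- The `A₂(0)` relations (R1)–(R9) for a family `(z_{i,j})_{1≤i,j≤3}` in a
unital *-ring. -/
structure A2Rel {A : Type*} [Ring A] [StarRing A] (z : ℕ → ℕ → A) : Prop where
  r1 : ∀ i j l, Idx3 i → Idx3 j → Idx3 l → j < l → z i j * z i l = 0
  r2 : ∀ i k j, Idx3 i → Idx3 k → Idx3 j → i < k → z i j * z k j = 0
  r3 : ∀ i k j l, Idx3 i → Idx3 k → Idx3 j → Idx3 l → i < k → j < l →
    z i l * z k j = z k j * z i l
  r4 : ∀ i k j l, Idx3 i → Idx3 k → Idx3 j → Idx3 l → i < k → j < l →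
    min k l ≤ max i j → z i l * z k j = 0
  r5 : ∀ i k j l, Idx3 i → Idx3 k → Idx3 j → Idx3 l → i < k → j < l →
    max i j + 1 < min k l → z i j * z k l = z k l * z i j
  r6 : ∀ i k j l, Idx3 i → Idx3 k → Idx3 j → Idx3 l → i < k → j < l →
    max i j + 1 = min k l → z i j * z k l - z k l * z i j = z i l * z k j
  r7 : z 1 1 * z 2 2 * z 3 3 = 1
  r8_11 : star (z 1 1) = z 2 2 * z 3 3
  r8_22 : star (z 2 2) = z 1 1 * z 3 3
  r8_33 : star (z 3 3) = z 1 1 * z 2 2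
  r8_21 : star (z 2 1) = z 1 2 * z 3 3
  r8_31 : star (z 3 1) = z 1 2 * z 2 3
  r8_32 : star (z 3 2) = z 1 1 * z 2 3
  r8_12 : star (z 1 2) = z 2 1 * z 3 3
  r8_13 : star (z 1 3) = z 2 1 * z 3 2
  r8_23 : star (z 2 3) = z 1 1 * z 3 2
  r9 : ∀ i j r s, Idx3 i → Idx3 j → Idx3 r → Idx3 s → i ≠ r → j ≠ s →
    star (z i j) * z r s = z r s * star (z i j)

namespace A2Rel

variable {A : Type*} [Ring A] [StarRing A] {z : ℕ → ℕ → A}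

lemma comm_11_33 (h : A2Rel z) : z 1 1 * z 3 3 = z 3 3 * z 1 1 :=
  h.r5 1 3 1 3 (by simp [Idx3]) (by simp [Idx3]) (by simp [Idx3]) (by simp [Idx3])
    (by simp) (by simp) (by simp)

lemma q11_eq (h : A2Rel z) : z 1 1 * star (z 1 1) = 1 := by
  rw [h.r8_11, ← mul_assoc, h.r7]

lemma p33_eq (h : A2Rel z) : star (z 3 3) * z 3 3 = 1 := by
  rw [h.r8_33, h.r7]

lemma q22_eq (h : A2Rel z) : z 2 2 * star (z 2 2) = star (z 1 1) * z 1 1 := by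
  rw [h.r8_22, h.r8_11, h.comm_11_33, mul_assoc]

lemma p22_eq (h : A2Rel z) : star (z 2 2) * z 2 2 = z 3 3 * star (z 3 3) := by
  rw [h.r8_22, h.r8_33, h.comm_11_33, mul_assoc]

lemma q21_eq (h : A2Rel z) : z 2 1 * star (z 2 1) = 1 - star (z 1 1) * z 1 1 := by
  have h3 : z 1 2 * z 2 1 = z 2 1 * z 1 2 :=
    h.r3 1 2 1 2 (by simp [Idx3]) (by simp [Idx3]) (by simp [Idx3]) (by simp [Idx3])
      (by simp) (by simp)
  have h6 : z 1 1 * z 2 2 - z 2 2 * z 1 1 = z 1 2 * z 2 1 :=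
    h.r6 1 2 1 2 (by simp [Idx3]) (by simp [Idx3]) (by simp [Idx3]) (by simp [Idx3])
      (by simp) (by simp) (by simp)
  rw [← h.q22_eq, h.r8_21, h.r8_22, ← mul_assoc, ← h3, ← h6, sub_mul, h.r7, mul_assoc]

lemma p31_eq (h : A2Rel z) :
    star (z 3 1) * z 3 1 = 1 - star (z 1 1) * z 1 1 - star (z 2 1) * z 2 1 := by
  have h3 : z 1 2 * z 2 1 = z 2 1 * z 1 2 :=
    h.r3 1 2 1 2 (by simp [Idx3]) (by simp [Idx3]) (by simp [Idx3]) (by simp [Idx3])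
      (by simp) (by simp)
  have h6 : z 2 1 * z 3 3 - z 3 3 * z 2 1 = z 2 3 * z 3 1 :=
    h.r6 2 3 1 3 (by simp [Idx3]) (by simp [Idx3]) (by simp [Idx3]) (by simp [Idx3])
      (by simp) (by simp) (by simp)
  rw [← h.q21_eq, h.r8_31, h.r8_21, mul_assoc, ← h6, mul_sub, ← mul_assoc, h3, mul_assoc, mul_assoc]

lemma q31_eq (h : A2Rel z) : z 3 1 * star (z 3 1) = star (z 3 1) * z 3 1 := by
  have h1 : z 1 2 * z 3 1 = z 3 1 * z 1 2 :=
    h.r3 1 3 1 2 (by simp [Idx3]) (by simp [Idx3]) (by simp [Idx3]) (by simp [Idx3])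
      (by simp) (by simp)
  have h2 : z 2 3 * z 3 1 = z 3 1 * z 2 3 :=
    h.r3 2 3 1 3 (by simp [Idx3]) (by simp [Idx3]) (by simp [Idx3]) (by simp [Idx3])
      (by simp) (by simp)
  rw [h.r8_31, ← mul_assoc, ← h1, mul_assoc, mul_assoc, h2]

lemma p32_eq (h : A2Rel z) : star (z 3 2) * z 3 2 = 1 - z 3 3 * star (z 3 3) := by
  have h6 : z 2 2 * z 3 3 - z 3 3 * z 2 2 = z 2 3 * z 3 2 :=
    h.r6 2 3 2 3 (by simp [Idx3]) (by simp [Idx3]) (by simp [Idx3]) (by simp [Idx3])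
      (by simp) (by simp) (by simp)
  rw [← h.p22_eq, h.r8_22, h.r8_32, mul_assoc, ← h6, mul_sub, ← mul_assoc, h.r7, mul_assoc]

lemma q32_eq (h : A2Rel z) :
    z 3 2 * star (z 3 2) =
      star (z 1 1) * z 1 1 + star (z 2 1) * z 2 1 - z 3 3 * star (z 3 3) := by
  have h6 : z 1 1 * z 3 2 - z 3 2 * z 1 1 = z 1 2 * z 3 1 :=
    h.r6 1 3 1 2 (by simp [Idx3]) (by simp [Idx3]) (by simp [Idx3]) (by simp [Idx3])
      (by simp) (by simp) (by simp)
  have h1 : z 2 3 * z 3 1 = z 3 1 * z 2 3 :=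
    h.r3 2 3 1 3 (by simp [Idx3]) (by simp [Idx3]) (by simp [Idx3]) (by simp [Idx3])
      (by simp) (by simp)
  have h2 : z 2 3 * z 3 2 = z 3 2 * z 2 3 :=
    h.r3 2 3 2 3 (by simp [Idx3]) (by simp [Idx3]) (by simp [Idx3]) (by simp [Idx3])
      (by simp) (by simp)
  have key : z 3 2 * star (z 3 2) = star (z 3 2) * z 3 2 - star (z 3 1) * z 3 1 := by
    have h6' : z 3 2 * z 1 1 = z 1 1 * z 3 2 - z 1 2 * z 3 1 := by rw [← h6]; abel
    rw [h.r8_32, h.r8_31, ← mul_assoc, h6', sub_mul, mul_assoc, mul_assoc, mul_assoc, mul_assoc,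
      h1, h2]
  rw [key, h.p32_eq, h.p31_eq]
  abel

lemma p11_idem (h : A2Rel z) :
    (star (z 1 1) * z 1 1) * (star (z 1 1) * z 1 1) = star (z 1 1) * z 1 1 := by
  rw [mul_assoc, ← mul_assoc (z 1 1), h.q11_eq, one_mul]

lemma q33_idem (h : A2Rel z) :
    (z 3 3 * star (z 3 3)) * (z 3 3 * star (z 3 3)) = z 3 3 * star (z 3 3) := by
  rw [mul_assoc, ← mul_assoc (star (z 3 3)), h.p33_eq, one_mul]

lemma p21_idem (h : A2Rel z) :
    (star (z 2 1) * z 2 1) * (star (z 2 1) * z 2 1) = star (z 2 1) * z 2 1 := by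
  have h2 : z 1 1 * z 2 1 = 0 :=
    h.r2 1 2 1 (by simp [Idx3]) (by simp [Idx3]) (by simp [Idx3]) (by simp)
  rw [mul_assoc, ← mul_assoc (z 2 1), h.q21_eq, sub_mul, mul_assoc _ (z 1 1), h2]
  simp

lemma p21_mul_p11 (h : A2Rel z) : (star (z 2 1) * z 2 1) * (star (z 1 1) * z 1 1) = 0 := by
  have h1 : z 2 1 * z 2 2 = 0 :=
    h.r1 2 1 2 (by simp [Idx3]) (by simp [Idx3]) (by simp [Idx3]) (by simp)
  have h2 : z 2 1 * star (z 1 1) = 0 := by rw [h.r8_11, ← mul_assoc, h1, zero_mul]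
  rw [mul_assoc, ← mul_assoc (z 2 1), h2, zero_mul, mul_zero]

lemma p11_mul_p21 (h : A2Rel z) : (star (z 1 1) * z 1 1) * (star (z 2 1) * z 2 1) = 0 := by
  simpa [mul_assoc] using congrArg star h.p21_mul_p11

lemma p11_commute_q33 (h : A2Rel z) :
    Commute (star (z 1 1) * z 1 1) (z 3 3 * star (z 3 3)) := by
  have h1 : Commute (z 1 1) (z 3 3) := h.comm_11_33
  have h2 : Commute (star (z 1 1)) (z 3 3) :=
    h.r9 1 1 3 3 (by simp [Idx3]) (by simp [Idx3]) (by simp [Idx3]) (by simp [Idx3])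
      (by simp) (by simp)
  have h3 : Commute (z 1 1) (star (z 3 3)) := by simpa using h2.star_star
  exact (h2.mul_left h1).mul_right (h1.star_star.mul_left h3)

lemma p31_mul_q33 (h : A2Rel z) : (star (z 3 1) * z 3 1) * (z 3 3 * star (z 3 3)) = 0 := by
  have h3 : z 2 2 * z 3 1 = z 3 1 * z 2 2 :=
    h.r3 2 3 1 2 (by simp [Idx3]) (by simp [Idx3]) (by simp [Idx3]) (by simp [Idx3])
      (by simp) (by simp)
  have h4 : z 2 2 * z 3 1 = 0 :=
    h.r4 2 3 1 2 (by simp [Idx3]) (by simp [Idx3]) (by simp [Idx3]) (by simp [Idx3])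
      (by simp) (by simp) (by simp)
  have h9 : star (z 2 2) * z 3 1 = z 3 1 * star (z 2 2) :=
    h.r9 2 2 3 1 (by simp [Idx3]) (by simp [Idx3]) (by simp [Idx3]) (by simp [Idx3])
      (by simp) (by simp)
  rw [← h.p22_eq, mul_assoc, ← mul_assoc (z 3 1), ← h9, mul_assoc (star (z 2 2)), ← h3, h4]
  simp

lemma q33_mul_p31 (h : A2Rel z) : (z 3 3 * star (z 3 3)) * (star (z 3 1) * z 3 1) = 0 := by
  simpa [mul_assoc] using congrArg star h.p31_mul_q33

/-- Since `p₃₁ = 1 - p₁₁ - p₂₁`, this is the orthogonality of `p₃₁` and `q₃₃`. -/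
lemma p21_mul_q33 (h : A2Rel z) : (star (z 2 1) * z 2 1) * (z 3 3 * star (z 3 3)) =
    z 3 3 * star (z 3 3) - (star (z 1 1) * z 1 1) * (z 3 3 * star (z 3 3)) := by
  have := h.p31_mul_q33
  rw [h.p31_eq, sub_mul, sub_mul, one_mul] at this
  exact (sub_eq_zero.mp this).symm

lemma q33_mul_p21 (h : A2Rel z) : (z 3 3 * star (z 3 3)) * (star (z 2 1) * z 2 1) =
    z 3 3 * star (z 3 3) - (star (z 1 1) * z 1 1) * (z 3 3 * star (z 3 3)) := by
  have := h.q33_mul_p31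
  rw [h.p31_eq, mul_sub, mul_sub, mul_one, ← h.p11_commute_q33.eq] at this
  exact (sub_eq_zero.mp this).symm

/-- The values taken by the `p_{i,j}` and `q_{i,j}`, `j ≤ i`, in terms of `p₁₁`, `p₂₁`, `q₃₃`. -/
lemma cases_pq (h : A2Rel z) {x : A}
    (hx : ∃ i j, 1 ≤ j ∧ j ≤ i ∧ i ≤ 3 ∧ (x = star (z i j) * z i j ∨ x = z i j * star (z i j)))
    {a b c : A} (ha : star (z 1 1) * z 1 1 = a) (hb : star (z 2 1) * z 2 1 = b)
    (hc : z 3 3 * star (z 3 3) = c) :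
    x = 1 ∨ x = a ∨ x = b ∨ x = c ∨ x = 1 - a ∨ x = 1 - c ∨ x = 1 - a - b ∨ x = a + b - c := by
  obtain ⟨i, j, h1, h2, h3, hx⟩ := hx
  have hi : 1 ≤ i := h1.trans h2
  interval_cases i <;> interval_cases j <;>
    simp only [h.q11_eq, h.p33_eq, h.q22_eq, h.p22_eq, h.q21_eq, h.q31_eq, h.p31_eq, h.p32_eq,
      h.q32_eq, ha, hb, hc] at hx <;> tauto

end A2Rel

/-- in a unital C*-algebra, if `(z_{i,j})_{1≤i,j≤3}` satisfies the `A₂(0)`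
relations, then all the elements `p_{i,j} = z_{i,j}* z_{i,j}` and
`q_{i,j} = z_{i,j} z_{i,j}*` for `1 ≤ j ≤ i ≤ 3` are projections, and they all commute
with each other. -/
theorem A2_p_q_commuting_projections
    {A : Type*} [NormedRing A] [StarRing A] [CStarRing A]
    [NormedAlgebra ℂ A] [StarModule ℂ A] [CompleteSpace A]
    (z : ℕ → ℕ → A) (hrel : A2Rel z) :
    ∀ x ∈ {x : A | ∃ i j, 1 ≤ j ∧ j ≤ i ∧ i ≤ 3 ∧
        (x = star (z i j) * z i j ∨ x = z i j * star (z i j))},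
      (IsSelfAdjoint x ∧ x * x = x) ∧
      ∀ y ∈ {y : A | ∃ i j, 1 ≤ j ∧ j ≤ i ∧ i ≤ 3 ∧
          (y = star (z i j) * z i j ∨ y = z i j * star (z i j))},
        x * y = y * x := by
  intro x hx
  obtain ⟨a, ha⟩ : ∃ a, star (z 1 1) * z 1 1 = a := ⟨_, rfl⟩
  obtain ⟨b, hb⟩ : ∃ b, star (z 2 1) * z 2 1 = b := ⟨_, rfl⟩
  obtain ⟨c, hc⟩ : ∃ c, z 3 3 * star (z 3 3) = c := ⟨_, rfl⟩
  have haa := hrel.p11_idem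
  have hbb := hrel.p21_idem
  have hcc := hrel.q33_idem
  have hab := hrel.p11_mul_p21
  have hba := hrel.p21_mul_p11
  have hac := hrel.p11_commute_q33
  have hbc := hrel.p21_mul_q33
  have hcb := hrel.q33_mul_p21
  simp only [ha, hb, hc] at haa hbb hcc hab hba hac hbc hcb
  have hca : c * a = a * c := hac.symm.eq
  have cab : Commute a b := hab.trans hba.symm
  have cbc : Commute b c := hbc.trans hcb.symm
  have closure : ∀ w, Commute w a → Commute w b → Commute w c →
      ∀ y ∈ {y : A | ∃ i j, 1 ≤ j ∧ j ≤ i ∧ i ≤ 3 ∧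
        (y = star (z i j) * z i j ∨ y = z i j * star (z i j))}, Commute w y := by
    intro w wa wb wc y hy
    have w1 := Commute.one_right w
    rcases hrel.cases_pq hy ha hb hc with rfl | rfl | rfl | rfl | rfl | rfl | rfl | rfl
    exacts [w1, wa, wb, wc, w1.sub_right wa, w1.sub_right wc, (w1.sub_right wa).sub_right wb,
      (wa.add_right wb).sub_right wc]
  refine ⟨⟨?_, ?_⟩, closure x ?_ ?_ ?_⟩
  · obtain ⟨i, j, -, -, -, rfl | rfl⟩ := hx
    · exact IsSelfAdjoint.star_mul_self _
    · exact IsSelfAdjoint.mul_star_self _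
  · rcases hrel.cases_pq hx ha hb hc with h | h | h | h | h | h | h | h <;> rw [h] <;>
      simp only [mul_add, mul_sub, add_mul, sub_mul, one_mul, mul_one, haa, hbb, hcc, hab, hba,
        hca, hbc, hcb] <;> abel
  · exact (closure a (.refl a) cab hac x hx).symm
  · exact (closure b cab.symm (.refl b) cbc x hx).symm
  · exact (closure c hac.symm cbc.symm (.refl c) x hx).symm
end

section
/- Let (T_{i,j})_{1≤i,j≤3} = ψ_{(1,1),s₁s₂s₁} be the family of bounded operators on ℓ²(ℕ³) defined in the context. Let V be the bounded operator on ℓ²(ℕ³) determined by V e_{a,b,c} = e_{a−1,b−1,c+1} if a ≥ 1 and b ≥ 1, and V e_{a,b,c} = 0 otherwise. Then V does not belong to the closed unital *-subalgebra of the bounded operators on ℓ²(ℕ³) generated by {T_{i,j} : 1 ≤ i, j ≤ 3}. -/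
/-- `ℓ²(ℕ³)`. -/
noncomputable abbrev lpN3 : Type := lp (fun _ : ℕ × ℕ × ℕ => ℂ) 2

/-- The standard orthonormal basis `(e_{a,b,c})` of `ℓ²(ℕ³)`. -/
noncomputable def eN3 (p : ℕ × ℕ × ℕ) : lpN3 := lp.single 2 p 1

open scoped InnerProductSpace

/-- The basis indices `(a, b, c)` with `a, b, c ≥ m` and `a - c = d`. -/
def deepSet (m : ℕ) (d : ℤ) : Set (ℕ × ℕ × ℕ) :=
  {p | m ≤ p.1 ∧ m ≤ p.2.1 ∧ m ≤ p.2.2 ∧ (p.1 : ℤ) - p.2.2 = d}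

/-- The algebraic span of the `e_{a,b,c}` with `a, b, c ≥ m` and `a - c = d`. -/
noncomputable def deepSpan (m : ℕ) (d : ℤ) : Submodule ℂ lpN3 :=
  Submodule.span ℂ (eN3 '' deepSet m d)

/-- Far from the coordinate hyperplanes, `x` preserves `a - c` and lowers each coordinate by a
bounded amount. -/
def DeepPreserving (x : lpN3 →L[ℂ] lpN3) : Prop :=
  ∃ N : ℕ, ∀ m d, ∀ v ∈ deepSpan (m + N) d, x v ∈ deepSpan m d

lemma deepSpan_anti {m n : ℕ} (h : m ≤ n) (d : ℤ) : deepSpan n d ≤ deepSpan m d := by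
  apply Submodule.span_mono
  apply Set.image_mono
  rintro p ⟨h1, h2, h3, h4⟩
  exact ⟨h.trans h1, h.trans h2, h.trans h3, h4⟩

lemma eN3_mem_deepSpan {m : ℕ} {d : ℤ} {a b c : ℕ} (ha : m ≤ a) (hb : m ≤ b) (hc : m ≤ c)
    (hd : (a : ℤ) - c = d) : eN3 (a, b, c) ∈ deepSpan m d :=
  Submodule.subset_span ⟨(a, b, c), ⟨ha, hb, hc, hd⟩, rfl⟩

lemma inner_eN3 (p q : ℕ × ℕ × ℕ) : ⟪eN3 p, eN3 q⟫_ℂ = if p = q then 1 else 0 := by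
  unfold eN3
  rw [lp.inner_single_left]
  by_cases h : p = q
  · subst h; simp
  · simp [h]

lemma norm_eN3 (p : ℕ × ℕ × ℕ) : ‖eN3 p‖ = 1 := by
  unfold eN3
  rw [lp.norm_single (by norm_num)]
  simp

lemma adjoint_eN3_eq (x : lpN3 →L[ℂ] lpN3) (p : ℕ × ℕ × ℕ) (f : lpN3)
    (h : ∀ a b c, ⟪x (eN3 (a, b, c)), eN3 p⟫_ℂ = ⟪eN3 (a, b, c), f⟫_ℂ) : star x (eN3 p) = f := by
  ext ⟨a, b, c⟩
  have h1 : ⟪eN3 (a, b, c), star x (eN3 p)⟫_ℂ = ⟪eN3 (a, b, c), f⟫_ℂ := by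
    rw [ContinuousLinearMap.star_eq_adjoint, ContinuousLinearMap.adjoint_inner_right, h]
  unfold eN3 at h1 ⊢
  rw [lp.inner_single_left, lp.inner_single_left] at h1
  simpa using h1

/-- It suffices to check the action on basis vectors with positive coordinates, with loss of at
most one in each coordinate. -/
lemma deepPreserving_of_basis (x : lpN3 →L[ℂ] lpN3)
    (h : ∀ m a b c : ℕ, m + 1 ≤ a → m + 1 ≤ b → m + 1 ≤ c →
      x (eN3 (a, b, c)) ∈ deepSpan m ((a : ℤ) - c)) : DeepPreserving x := by
  refine ⟨1, fun m d v hv => ?_⟩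
  have hle : deepSpan (m + 1) d ≤ (deepSpan m d).comap (x : lpN3 →ₗ[ℂ] lpN3) := by
    refine Submodule.span_le.2 ?_
    rintro _ ⟨⟨a, b, c⟩, ⟨ha, hb, hc, rfl⟩, rfl⟩
    exact h m a b c ha hb hc
  exact hle hv

namespace DeepPreserving

lemma add {x y : lpN3 →L[ℂ] lpN3} (hx : DeepPreserving x) (hy : DeepPreserving y) :
    DeepPreserving (x + y) := by
  obtain ⟨N, hN⟩ := hx
  obtain ⟨M, hM⟩ := hy
  refine ⟨max N M, fun m d v hv => ?_⟩
  exact Submodule.add_mem _ (hN m d v (deepSpan_anti (by omega) d hv))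
    (hM m d v (deepSpan_anti (by omega) d hv))

lemma mul {x y : lpN3 →L[ℂ] lpN3} (hx : DeepPreserving x) (hy : DeepPreserving y) :
    DeepPreserving (x * y) := by
  obtain ⟨N, hN⟩ := hx
  obtain ⟨M, hM⟩ := hy
  refine ⟨N + M, fun m d v hv => ?_⟩
  exact hN m d _ (hM (m + N) d v (by rwa [add_assoc]))

lemma algebraMap (r : ℂ) : DeepPreserving (algebraMap ℂ (lpN3 →L[ℂ] lpN3) r) :=
  ⟨0, fun m d v hv => by
    rw [Algebra.algebraMap_eq_smul_one]
    exact Submodule.smul_mem _ r hv⟩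

end DeepPreserving

/-- The vectors of `deepSpan m d` are orthogonal to the `e_{a,b,c}` with `a - c ≠ d`. -/
lemma inner_eq_zero_of_mem_deepSpan {m : ℕ} {d : ℤ} {a b c : ℕ} (h : (a : ℤ) - c ≠ d)
    {v : lpN3} (hv : v ∈ deepSpan m d) : ⟪eN3 (a, b, c), v⟫_ℂ = 0 := by
  induction hv using Submodule.span_induction with
  | mem v hv =>
    obtain ⟨⟨a', b', c'⟩, ⟨-, -, -, hd⟩, rfl⟩ := hv
    rw [inner_eN3, if_neg]
    intro heq
    simp only [Prod.mk.injEq] at heq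
    obtain ⟨rfl, rfl, rfl⟩ := heq
    exact h hd
  | zero => simp
  | add v w _ _ hv hw => rw [inner_add_right, hv, hw, add_zero]
  | smul r v _ hv => rw [inner_smul_right, hv, mul_zero]

/-- `DeepPreserving` for `x` and its adjoint when both vanish on the basis vectors with positive
coordinates; `h'` expresses the vanishing of the adjoint through the matrix entries of `x`. -/
lemma deepPreserving_of_zero (x : lpN3 →L[ℂ] lpN3)
    (h : ∀ a b c : ℕ, x (eN3 (a + 1, b + 1, c + 1)) = 0)
    (h' : ∀ a b c a' b' c' : ℕ,
      ⟪x (eN3 (a', b', c')), eN3 (a + 1, b + 1, c + 1)⟫_ℂ = 0) :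
    DeepPreserving x ∧ DeepPreserving (star x) := by
  constructor <;> refine deepPreserving_of_basis _ fun m a b c ha hb hc => ?_ <;>
    obtain ⟨a, rfl⟩ := Nat.exists_eq_add_of_le' (Nat.one_le_of_lt ha) <;>
    obtain ⟨b, rfl⟩ := Nat.exists_eq_add_of_le' (Nat.one_le_of_lt hb) <;>
    obtain ⟨c, rfl⟩ := Nat.exists_eq_add_of_le' (Nat.one_le_of_lt hc)
  · rw [h]; exact Submodule.zero_mem _
  · rw [adjoint_eN3_eq x _ 0 (fun a' b' c' => by rw [h', inner_zero_right])]
    exact Submodule.zero_mem _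

/-- `DeepPreserving` for `x` and its adjoint when, on the basis vectors with positive coordinates,
`x` sends `e_p` to `e_{f p}` and its adjoint sends `e_p` to `e_{g p}`; `h'` expresses the latter
through the matrix entries of `x`. -/
lemma deepPreserving_of_shift (x : lpN3 →L[ℂ] lpN3) (f g : ℕ → ℕ → ℕ → ℕ × ℕ × ℕ)
    (hf : ∀ m a b c : ℕ, m ≤ a → m ≤ b → m ≤ c →
      f (a + 1) (b + 1) (c + 1) ∈ deepSet m ((a : ℤ) - c))
    (hg : ∀ m a b c : ℕ, m ≤ a → m ≤ b → m ≤ c →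
      g (a + 1) (b + 1) (c + 1) ∈ deepSet m ((a : ℤ) - c))
    (h : ∀ a b c : ℕ, x (eN3 (a + 1, b + 1, c + 1)) = eN3 (f (a + 1) (b + 1) (c + 1)))
    (h' : ∀ a b c a' b' c' : ℕ, ⟪x (eN3 (a', b', c')), eN3 (a + 1, b + 1, c + 1)⟫_ℂ =
      if (a', b', c') = g (a + 1) (b + 1) (c + 1) then 1 else 0) :
    DeepPreserving x ∧ DeepPreserving (star x) := by
  constructor <;> refine deepPreserving_of_basis _ fun m a b c ha hb hc => ?_ <;>
    obtain ⟨a, rfl⟩ := Nat.exists_eq_add_of_le' (Nat.one_le_of_lt ha) <;>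
    obtain ⟨b, rfl⟩ := Nat.exists_eq_add_of_le' (Nat.one_le_of_lt hb) <;>
    obtain ⟨c, rfl⟩ := Nat.exists_eq_add_of_le' (Nat.one_le_of_lt hc) <;>
    have e : ((a + 1 : ℕ) : ℤ) - (c + 1 : ℕ) = a - c := by push_cast; ring
  · rw [h, e]
    exact Submodule.subset_span ⟨_, hf m a b c (by omega) (by omega) (by omega), rfl⟩
  · rw [adjoint_eN3_eq x _ (eN3 (g (a + 1) (b + 1) (c + 1)))
      (fun a' b' c' => by rw [h', inner_eN3]), e]
    exact Submodule.subset_span ⟨_, hg m a b c (by omega) (by omega) (by omega), rfl⟩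

/-- with `(T_{i,j}) = ψ_{(1,1),s₁s₂s₁}` on `ℓ²(ℕ³)` (determined by its
action on the standard orthonormal basis, as in the hypotheses) and `V` the operator
`e_{a,b,c} ↦ e_{a−1,b−1,c+1}` (zero unless `a ≥ 1` and `b ≥ 1`), the operator `V` does
not belong to the closed unital *-subalgebra of bounded operators generated by the
`T_{i,j}`. -/
theorem psi_s1s2s1_image_proper
    (T : ℕ → ℕ → (lpN3 →L[ℂ] lpN3))
    (h11 : ∀ a b c : ℕ, T 1 1 (eN3 (a, b, c)) =
      if a ≠ 0 ∧ c ≠ 0 then eN3 (a - 1, b, c - 1) else 0)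
    (h12 : ∀ a b c : ℕ, T 1 2 (eN3 (a, b, c)) =
      (if a = 0 ∧ 1 ≤ b then eN3 (0, b - 1, c + 1) else 0) +
      (if c = 0 ∧ 1 ≤ a then eN3 (a - 1, b, 0) else 0))
    (h13 : ∀ a b c : ℕ, T 1 3 (eN3 (a, b, c)) =
      if a = 0 ∧ b = 0 then eN3 (0, 0, c) else 0)
    (h21 : ∀ a b c : ℕ, T 2 1 (eN3 (a, b, c)) =
      (if a = 0 ∧ 1 ≤ c then eN3 (0, b, c - 1) else 0) +
      (if c = 0 ∧ 1 ≤ b then eN3 (a + 1, b - 1, 0) else 0))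
    (h22 : ∀ a b c : ℕ, T 2 2 (eN3 (a, b, c)) =
      if b = 0 then 0 else eN3 (a + 1, b - 1, c + 1))
    (h23 : ∀ a b c : ℕ, T 2 3 (eN3 (a, b, c)) =
      if b = 0 then eN3 (a + 1, 0, c) else 0)
    (h31 : ∀ a b c : ℕ, T 3 1 (eN3 (a, b, c)) =
      if b = 0 ∧ c = 0 then eN3 (a, 0, 0) else 0)
    (h32 : ∀ a b c : ℕ, T 3 2 (eN3 (a, b, c)) =
      if b = 0 then eN3 (a, 0, c + 1) else 0)
    (h33 : ∀ a b c : ℕ, T 3 3 (eN3 (a, b, c)) = eN3 (a, b + 1, c))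
    (V : lpN3 →L[ℂ] lpN3)
    (hV : ∀ a b c : ℕ, V (eN3 (a, b, c)) =
      if 1 ≤ a ∧ 1 ≤ b then eN3 (a - 1, b - 1, c + 1) else 0) :
    V ∉ (StarAlgebra.adjoin ℂ
      {x : lpN3 →L[ℂ] lpN3 | ∃ i j, Idx3 i ∧ Idx3 j ∧ x = T i j}).topologicalClosure := by
  have hgen : ∀ i j, Idx3 i → Idx3 j → DeepPreserving (T i j) ∧ DeepPreserving (star (T i j)) := by
    rintro i j ⟨hi, hi'⟩ ⟨hj, hj'⟩
    interval_cases i <;> interval_cases j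
    · refine deepPreserving_of_shift _ (fun a b c => (a - 1, b, c - 1))
        (fun a b c => (a + 1, b, c + 1)) ?_ ?_ ?_ ?_
      · intro m a b c _ _ _; simp only [deepSet, Set.mem_ofPred_eq]; omega
      · intro m a b c _ _ _; simp only [deepSet, Set.mem_ofPred_eq]; omega
      · intro a b c; rw [h11]; simp
      · intro a b c a' b' c'
        rw [h11]
        simp only [Prod.mk.injEq]
        split_ifs <;> simp only [inner_eN3, inner_zero_left, Prod.mk.injEq] <;>
          try (split_ifs <;> first | rfl | (exfalso; omega))
        exfalso; omega
    · refine deepPreserving_of_zero _ (fun a b c => by rw [h12]; simp) ?_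
      intro a b c a' b' c'
      rw [h12, inner_add_left]
      split_ifs <;> simp [inner_eN3]
    · refine deepPreserving_of_zero _ (fun a b c => by rw [h13]; simp) ?_
      intro a b c a' b' c'
      rw [h13]
      split_ifs <;> simp [inner_eN3]
    · refine deepPreserving_of_zero _ (fun a b c => by rw [h21]; simp) ?_
      intro a b c a' b' c'
      rw [h21, inner_add_left]
      split_ifs <;> simp [inner_eN3]
    · refine deepPreserving_of_shift _ (fun a b c => (a + 1, b - 1, c + 1))
        (fun a b c => (a - 1, b + 1, c - 1)) ?_ ?_ ?_ ?_
      · intro m a b c _ _ _; simp only [deepSet, Set.mem_ofPred_eq]; omega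
      · intro m a b c _ _ _; simp only [deepSet, Set.mem_ofPred_eq]; omega
      · intro a b c; rw [h22]; simp
      · intro a b c a' b' c'
        rw [h22]
        simp only [Prod.mk.injEq]
        split_ifs <;> simp only [inner_eN3, inner_zero_left, Prod.mk.injEq] <;>
          try (split_ifs <;> first | rfl | (exfalso; omega))
        exfalso; omega
    · refine deepPreserving_of_zero _ (fun a b c => by rw [h23]; simp) ?_
      intro a b c a' b' c'
      rw [h23]
      split_ifs <;> simp [inner_eN3]
    · refine deepPreserving_of_zero _ (fun a b c => by rw [h31]; simp) ?_
      intro a b c a' b' c'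
      rw [h31]
      split_ifs <;> simp [inner_eN3]
    · refine deepPreserving_of_zero _ (fun a b c => by rw [h32]; simp) ?_
      intro a b c a' b' c'
      rw [h32]
      split_ifs <;> simp [inner_eN3]
    · refine deepPreserving_of_shift _ (fun a b c => (a, b + 1, c))
        (fun a b c => (a, b - 1, c)) ?_ ?_ ?_ ?_
      · intro m a b c _ _ _; simp only [deepSet, Set.mem_ofPred_eq]; omega
      · intro m a b c _ _ _; simp only [deepSet, Set.mem_ofPred_eq]; omega
      · intro a b c; rw [h33]
      · intro a b c a' b' c'
        rw [h33]
        simp [inner_eN3]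
  -- Carrying the adjoint along makes the property stable under `star`.
  have hall : ∀ x ∈ StarAlgebra.adjoin ℂ
      {x : lpN3 →L[ℂ] lpN3 | ∃ i j, Idx3 i ∧ Idx3 j ∧ x = T i j},
      DeepPreserving x ∧ DeepPreserving (star x) := by
    intro x hx
    induction hx using StarAlgebra.adjoin_induction with
    | mem x hx =>
      obtain ⟨i, j, hi, hj, rfl⟩ := hx
      exact hgen i j hi hj
    | algebraMap r =>
      refine ⟨.algebraMap r, ?_⟩
      rw [← algebraMap_star_comm]
      exact .algebraMap _
    | add x y _ _ hx hy => exact ⟨hx.1.add hy.1, by rw [star_add]; exact hx.2.add hy.2⟩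
    | mul x y _ _ hx hy => exact ⟨hx.1.mul hy.1, by rw [star_mul]; exact hy.2.mul hx.2⟩
    | star x _ hx => exact ⟨hx.2, by rw [star_star]; exact hx.1⟩
  intro hmem
  rw [← SetLike.mem_coe, StarSubalgebra.topologicalClosure_coe] at hmem
  obtain ⟨x, hx, hdist⟩ := Metric.mem_closure_iff.1 hmem 1 one_pos
  obtain ⟨N, hN⟩ := (hall x hx).1
  have hxe : x (eN3 (N + 1, N + 1, N + 1)) ∈ deepSpan 0 0 :=
    hN 0 0 _ (eN3_mem_deepSpan (by omega) (by omega) (by omega) (by simp))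
  have hone : ⟪eN3 (N, N, N + 2), (V - x) (eN3 (N + 1, N + 1, N + 1))⟫_ℂ = 1 := by
    rw [sub_apply, inner_sub_right,
      inner_eq_zero_of_mem_deepSpan (by push_cast; omega) hxe, hV, if_pos (by omega)]
    simp only [Nat.add_sub_cancel, inner_eN3, if_true, sub_zero]
  have hle : (1 : ℝ) ≤ ‖V - x‖ := by
    calc (1 : ℝ) = ‖⟪eN3 (N, N, N + 2), (V - x) (eN3 (N + 1, N + 1, N + 1))⟫_ℂ‖ := by
          rw [hone, norm_one]
      _ ≤ ‖eN3 (N, N, N + 2)‖ * ‖(V - x) (eN3 (N + 1, N + 1, N + 1))‖ := norm_inner_le_norm _ _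
      _ ≤ ‖V - x‖ := by
          simpa [norm_eN3] using (V - x).le_opNorm (eN3 (N + 1, N + 1, N + 1))
  rw [dist_eq_norm] at hdist
  exact absurd hdist (not_lt.2 hle)
end

section
/- Let H be a nonzero complex Hilbert space and let (Z_{i,j})_{1≤i,j≤3} be bounded operators on H satisfying the A₂(0) relations and acting irreducibly. If Z_{3,1} = 0 and Z_{2,1} Z_{3,2} = 0, then Z_{2,1} = 0 or Z_{3,2} = 0. -/
/-- The family `(Z_{i,j})_{1≤i,j≤3}` of bounded operators acts irreducibly: the only
closed subspaces invariant under every `Z_{i,j}` and every `Z_{i,j}*` are `{0}` and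
the whole space. -/
def ActsIrreducibly {H : Type*} [NormedAddCommGroup H] [InnerProductSpace ℂ H]
    [CompleteSpace H] (Z : ℕ → ℕ → (H →L[ℂ] H)) : Prop :=
  ∀ V : Submodule ℂ H, IsClosed (V : Set H) →
    (∀ i j, Idx3 i → Idx3 j → ∀ x ∈ V, Z i j x ∈ V ∧ star (Z i j) x ∈ V) →
    V = ⊥ ∨ V = ⊤

/-! ### Consequences of the relations -/

section Algebra

variable {A : Type*} [NormedRing A] [StarRing A] {z : ℕ → ℕ → A}

lemma A2Rel.z13_eq_zero (h : A2Rel z) (hprod : z 2 1 * z 3 2 = 0) : z 1 3 = 0 := by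
  rw [← star_eq_zero, h.r8_13, hprod]

lemma A2Rel.star_z33_mul_z33 (h : A2Rel z) : star (z 3 3) * z 3 3 = 1 := by
  rw [h.r8_33, h.r7]

lemma A2Rel.z22_eq (h : A2Rel z) : z 2 2 = star (z 3 3) * star (z 1 1) := by
  rw [← star_mul, ← h.r8_22, star_star]

/-- `y y* = y* y`. -/
lemma A2Rel.z32_normal (h : A2Rel z) (h31 : z 3 1 = 0) :
    z 3 2 * star (z 3 2) = star (z 3 2) * z 3 2 := by
  have e1 := h.r6 1 3 1 2 (by simp [Idx3]) (by simp [Idx3]) (by simp [Idx3]) (by simp [Idx3])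
    (by norm_num) (by norm_num) (by norm_num)
  rw [h31, mul_zero, sub_eq_zero] at e1
  have e2 := h.r3 2 3 2 3 (by simp [Idx3]) (by simp [Idx3]) (by simp [Idx3]) (by simp [Idx3])
    (by norm_num) (by norm_num)
  rw [h.r8_32, ← mul_assoc, ← e1, mul_assoc, ← e2, mul_assoc]

/-- `q* q = y* y`, so that `q` vanishes wherever `y` does. -/
lemma A2Rel.star_z23_mul_z23 (h : A2Rel z) : star (z 2 3) * z 2 3 = star (z 3 2) * z 3 2 := by
  have e2 := h.r3 2 3 2 3 (by simp [Idx3]) (by simp [Idx3]) (by simp [Idx3]) (by simp [Idx3])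
    (by norm_num) (by norm_num)
  rw [h.r8_23, h.r8_32, mul_assoc, ← e2, mul_assoc]

/-- `p p* = x x*`, so that `p` and `x` have the same left annihilators. -/
lemma A2Rel.z12_mul_star_z12 (h : A2Rel z) : z 1 2 * star (z 1 2) = z 2 1 * star (z 2 1) := by
  have e2 := h.r3 1 2 1 2 (by simp [Idx3]) (by simp [Idx3]) (by simp [Idx3]) (by simp [Idx3])
    (by norm_num) (by norm_num)
  rw [h.r8_12, h.r8_21, ← mul_assoc, e2, mul_assoc]

variable [CStarRing A]

/-- `y x* = 0`: by normality of `y`, `x y = 0` forces `x y* = 0`, hence `y* x = 0`. -/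
lemma A2Rel.z32_mul_star_z21 (h : A2Rel z) (h31 : z 3 1 = 0) (hprod : z 2 1 * z 3 2 = 0) :
    star (z 3 2) * z 2 1 = 0 ∧ z 3 2 * star (z 2 1) = 0 := by
  have e : z 2 1 * star (z 3 2) = 0 := by
    rw [← CStarRing.mul_star_self_eq_zero_iff, star_mul, star_star, mul_assoc,
      ← mul_assoc (star (z 3 2)), ← h.z32_normal h31, mul_assoc, ← mul_assoc, hprod, zero_mul]
  have e' := h.r9 3 2 2 1 (by simp [Idx3]) (by simp [Idx3]) (by simp [Idx3]) (by simp [Idx3])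
    (by norm_num) (by norm_num)
  refine ⟨e'.trans e, ?_⟩
  rw [← star_eq_zero, star_mul, star_star, e]

lemma A2Rel.z32_mul_z21 (h : A2Rel z) (h31 : z 3 1 = 0) (hprod : z 2 1 * z 3 2 = 0) :
    z 3 2 * z 2 1 = 0 := by
  rw [← CStarRing.star_mul_self_eq_zero_iff, star_mul, mul_assoc, ← mul_assoc (star (z 3 2)),
    ← h.z32_normal h31, mul_assoc, (h.z32_mul_star_z21 h31 hprod).1, mul_zero, mul_zero]

lemma A2Rel.z32_mul_z12 (h : A2Rel z) (h31 : z 3 1 = 0) (hprod : z 2 1 * z 3 2 = 0) :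
    z 3 2 * z 1 2 = 0 := by
  rw [← CStarRing.mul_star_self_eq_zero_iff, star_mul, mul_assoc, ← mul_assoc (z 1 2),
    h.z12_mul_star_z12, mul_assoc, ← mul_assoc, h.z32_mul_z21 h31 hprod, zero_mul]

end Algebra

/-! ### The subspace `⋂ₙ ker (y dⁿ)` -/

section Subspace

variable {H : Type*} [NormedAddCommGroup H] [InnerProductSpace ℂ H]

/-- The largest subspace of `ker y` that is invariant under `d`, namely `⋂ₙ ker (y dⁿ)`. -/
def iterKer (y d : H →L[ℂ] H) : Submodule ℂ H :=
  ⨅ n : ℕ, (y * d ^ n).ker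

lemma mem_iterKer {y d : H →L[ℂ] H} {v : H} :
    v ∈ iterKer y d ↔ ∀ n : ℕ, y ((d ^ n) v) = 0 := by
  rw [iterKer, Submodule.mem_iInf]
  rfl

lemma isClosed_iterKer (y d : H →L[ℂ] H) : IsClosed (iterKer y d : Set H) := by
  rw [iterKer, Submodule.coe_iInf]
  exact isClosed_iInter fun n => (y * d ^ n).isClosed_ker

lemma apply_eq_zero_of_mem_iterKer {y d : H →L[ℂ] H} {v : H} (hv : v ∈ iterKer y d) :
    y v = 0 := by
  simpa using mem_iterKer.1 hv 0

lemma iterKer_self_mem {y d : H →L[ℂ] H} {v : H} (hv : v ∈ iterKer y d) :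
    d v ∈ iterKer y d := by
  rw [mem_iterKer] at hv ⊢
  intro n
  simpa [pow_succ] using hv (n + 1)

lemma iterKer_left_inverse_mem {y d c : H →L[ℂ] H} (hdc : d * c = 1) (hyc : y * c = 0)
    {v : H} (hv : v ∈ iterKer y d) : c v ∈ iterKer y d := by
  rw [mem_iterKer] at hv ⊢
  rintro (_ | n)
  · simpa using DFunLike.congr_fun hyc v
  · have e : d (c v) = v := DFunLike.congr_fun hdc v
    simpa [pow_succ, e] using hv n

lemma iterKer_commute_mem {y d T : H →L[ℂ] H} (hT : Commute d T) (S : H →L[ℂ] H)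
    (hS : y * T = S * y) {v : H} (hv : v ∈ iterKer y d) : T v ∈ iterKer y d := by
  rw [mem_iterKer] at hv ⊢
  intro n
  have e : y * d ^ n * T = S * (y * d ^ n) := by
    rw [mul_assoc, (hT.pow_left n).eq, ← mul_assoc, hS, mul_assoc]
  calc y ((d ^ n) (T v)) = S (y ((d ^ n) v)) := DFunLike.congr_fun e v
    _ = 0 := by rw [hv n, map_zero]

lemma range_mem_iterKer {y d T : H →L[ℂ] H} (hT : Commute d T) (hS : y * T = 0) (v : H) :
    T v ∈ iterKer y d := by
  rw [mem_iterKer]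
  intro n
  have e : y * d ^ n * T = 0 := by
    rw [mul_assoc, (hT.pow_left n).eq, ← mul_assoc, hS, zero_mul]
  simpa using DFunLike.congr_fun e v

/-- If `T* T = y* y` then `ker y ⊆ ker T`. -/
lemma apply_eq_zero_of_star_mul_self_eq [CompleteSpace H] {y T : H →L[ℂ] H}
    (hT : star T * T = star y * y) {v : H} (hv : y v = 0) : T v = 0 := by
  have e : (star T) (T v) = 0 := by
    have := DFunLike.congr_fun hT v
    simpa [hv] using this
  rw [ContinuousLinearMap.star_eq_adjoint] at e
  rw [← inner_self_eq_zero (𝕜 := ℂ), ← ContinuousLinearMap.adjoint_inner_left, e,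
    inner_zero_left]

end Subspace

/-! ### The dichotomy -/

/-- if `(Z_{i,j})` satisfies the `A₂(0)` relations on a nonzero Hilbert
space, acts irreducibly, `Z_{3,1} = 0` and `Z_{2,1} Z_{3,2} = 0`, then `Z_{2,1} = 0` or
`Z_{3,2} = 0`. -/
theorem A2_case4_dichotomy
    {H : Type*} [NormedAddCommGroup H] [InnerProductSpace ℂ H] [CompleteSpace H]
    [Nontrivial H]
    (Z : ℕ → ℕ → (H →L[ℂ] H)) (hrel : A2Rel Z) (hirr : ActsIrreducibly Z)
    (h31 : Z 3 1 = 0) (hprod : Z 2 1 * Z 3 2 = 0) :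
    Z 2 1 = 0 ∨ Z 3 2 = 0 := by
  have hI1 : Idx3 1 := by simp [Idx3]
  have hI2 : Idx3 2 := by simp [Idx3]
  have hI3 : Idx3 3 := by simp [Idx3]
  have h13 := hrel.z13_eq_zero hprod
  have hyx := hrel.z32_mul_z21 h31 hprod
  have hyx' := (hrel.z32_mul_star_z21 h31 hprod).2
  have hyp := hrel.z32_mul_z12 h31 hprod
  have hyp' : Z 3 2 * star (Z 1 2) = 0 := by rw [hrel.r8_12, ← mul_assoc, hyx, zero_mul]
  have hyc : Z 3 2 * Z 3 3 = 0 := hrel.r1 3 2 3 hI3 hI2 hI3 (by norm_num)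
  have hya : Z 3 2 * Z 1 1 = Z 1 1 * Z 3 2 := by
    have := hrel.r6 1 3 1 2 hI1 hI3 hI1 hI2 (by norm_num) (by norm_num) (by norm_num)
    rw [h31, mul_zero, sub_eq_zero] at this
    exact this.symm
  have hya' : Z 3 2 * star (Z 1 1) = star (Z 1 1) * Z 3 2 :=
    (hrel.r9 1 1 3 2 hI1 hI1 hI3 hI2 (by norm_num) (by norm_num)).symm
  have hca : Commute (star (Z 3 3)) (Z 1 1) :=
    hrel.r9 3 3 1 1 hI3 hI3 hI1 hI1 (by norm_num) (by norm_num)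
  have hca' : Commute (star (Z 3 3)) (star (Z 1 1)) :=
    Commute.star_star
      (hrel.r5 1 3 1 3 hI1 hI3 hI1 hI3 (by norm_num) (by norm_num) (by norm_num)).symm
  have hcx : Commute (star (Z 3 3)) (Z 2 1) :=
    hrel.r9 3 3 2 1 hI3 hI3 hI2 hI1 (by norm_num) (by norm_num)
  have hcx' : Commute (star (Z 3 3)) (star (Z 2 1)) := by
    have := hrel.r6 2 3 1 3 hI2 hI3 hI1 hI3 (by norm_num) (by norm_num) (by norm_num)
    rw [h31, mul_zero, sub_eq_zero] at this
    exact Commute.star_star this.symm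
  have hcp : Commute (star (Z 3 3)) (Z 1 2) :=
    hrel.r9 3 3 1 2 hI3 hI3 hI1 hI2 (by norm_num) (by norm_num)
  have hcp' : Commute (star (Z 3 3)) (star (Z 1 2)) := by
    have := hrel.r6 1 3 2 3 hI1 hI3 hI2 hI3 (by norm_num) (by norm_num) (by norm_num)
    rw [h13, zero_mul, sub_eq_zero] at this
    exact Commute.star_star this.symm
  -- The subspace `V = ⋂ₙ ker (y (c*)ⁿ)` reduces the family.
  have key := hirr (iterKer (Z 3 2) (star (Z 3 3))) (isClosed_iterKer _ _) (by
    intro i j hi hj v hv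
    have hy := apply_eq_zero_of_mem_iterKer hv
    have hc := iterKer_left_inverse_mem hrel.star_z33_mul_z33 hyc hv
    have hc' := iterKer_self_mem hv
    have ha' := iterKer_commute_mem hca' _ hya' hv
    obtain ⟨hi1, hi3⟩ := hi
    obtain ⟨hj1, hj3⟩ := hj
    interval_cases i <;> interval_cases j
    · exact ⟨iterKer_commute_mem hca _ hya hv, ha'⟩
    · exact ⟨range_mem_iterKer hcp hyp v, range_mem_iterKer hcp' hyp' v⟩
    · simp [h13]
    · exact ⟨range_mem_iterKer hcx hyx v, range_mem_iterKer hcx' hyx' v⟩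
    · constructor
      · rw [hrel.z22_eq]
        exact iterKer_self_mem ha'
      · rw [hrel.r8_22]
        exact iterKer_commute_mem hca _ hya hc
    · have e : Z 2 3 v = 0 := apply_eq_zero_of_star_mul_self_eq hrel.star_z23_mul_z23 hy
      have e' : star (Z 2 3) v = 0 := by
        rw [hrel.r8_23]
        simp [hy]
      simp [e, e']
    · simp [h31]
    · have e' : star (Z 3 2) v = 0 :=
        apply_eq_zero_of_star_mul_self_eq (by rw [star_star, hrel.z32_normal h31]) hy
      simp [hy, e']
    · exact ⟨hc, hc'⟩)
  rcases key with hV | hV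
  · left
    ext v
    simpa [hV] using range_mem_iterKer hcx hyx v
  · right
    ext v
    exact apply_eq_zero_of_mem_iterKer (d := star (Z 3 3)) (hV ▸ Submodule.mem_top)
end

section
/- Let H be a nonzero complex Hilbert space and let (Z_{i,j})_{1≤i,j≤3} be bounded operators on H satisfying the A₂(0) relations and acting irreducibly. If Z_{3,1} ≠ 0 and Z_{2,1} Z_{3,2} ≠ 0, then Z_{3,1} Z_{2,1} Z_{3,2} ≠ 0. -/
namespace A2Rel

/-! ### The left ideal of words in a ring -/

section Ring

variable {A : Type*} [Ring A]

/-- The word `z 3 1 * z 2 1 ^ n * z 1 1 ^ m`. -/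
def word (z : ℕ → ℕ → A) (n m : ℕ) : A := z 3 1 * z 2 1 ^ n * z 1 1 ^ m

/-- The left ideal generated by all the words `z 3 1 * z 2 1 ^ n * z 1 1 ^ m`. In a
noncommutative ring, `Ideal` means left ideal. -/
def genIdeal (z : ℕ → ℕ → A) : Ideal A :=
  Ideal.span (Set.range fun p : ℕ × ℕ => word z p.1 p.2)

lemma word_mem (z : ℕ → ℕ → A) (n m : ℕ) : word z n m ∈ genIdeal z :=
  Ideal.subset_span ⟨(n, m), rfl⟩

lemma pow_mul_of_comm_add {a e b d : A} (h : a * e = e * a + b * d) (hab : a * b = 0) (m : ℕ) :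
    a ^ (m + 1) * e = e * a ^ (m + 1) + b * d * a ^ m := by
  induction m with
  | zero => simpa using h
  | succ m ih =>
    rw [pow_succ' a (m + 1), mul_assoc, ih, mul_add, ← mul_assoc, h, add_mul, ← mul_assoc a,
      ← mul_assoc a, hab, zero_mul, zero_mul, add_zero, mul_assoc e, ← pow_succ']

/-- Only the last factor of a nontrivial power matters when it annihilates `y`. -/
lemma pow_succ_mul_eq_zero {a y : A} (h : a * y = 0) (m : ℕ) : a ^ (m + 1) * y = 0 := by
  rw [pow_succ, mul_assoc, h, mul_zero]

lemma mul_pow_mul_of_commute {g d b : A} (hg : g * b = b * g) (hd : d * b = b * d) (n : ℕ) :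
    g * d ^ n * b = b * (g * d ^ n) := by
  have h : Commute (d ^ n) b := Commute.pow_left hd n
  rw [mul_assoc, h.eq, ← mul_assoc, hg, mul_assoc]

variable [StarRing A] {z : ℕ → ℕ → A}

/-- The words with `m = 0` annihilate `z 3 2`: `z 2 1 * z 3 2` is `star (z 1 3)`, which commutes
with `z 2 1` and is annihilated by `z 3 1`. -/
lemma word_mul_32 (hz : A2Rel z) (h0 : z 3 1 * z 2 1 * z 3 2 = 0) (n : ℕ) :
    z 3 1 * z 2 1 ^ n * z 3 2 = 0 := by
  rcases n with _ | n
  · simpa using hz.r1 3 1 2 ⟨by simp, by simp⟩ ⟨by simp, by simp⟩ ⟨by simp, by simp⟩ (by simp)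
  · have hc : Commute (z 2 1) (star (z 1 3)) :=
      (hz.r9 1 3 2 1 ⟨by simp, by simp⟩ ⟨by simp, by simp⟩ ⟨by simp, by simp⟩
        ⟨by simp, by simp⟩ (by simp) (by simp)).symm
    have := (hc.pow_left n).eq
    rw [hz.r8_13] at this
    rw [pow_succ, mul_assoc, mul_assoc, this, ← mul_assoc, ← mul_assoc, h0, zero_mul]

lemma word_mul_star_eq_zero (hz : A2Rel z) (h0 : z 3 1 * z 2 1 * z 3 2 = 0) (n m : ℕ) :
    word z n m * (z 2 1 * z 3 2) = 0 := by
  rcases m with _ | m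
  · have := hz.word_mul_32 h0 (n + 1)
    simpa [word, pow_succ, mul_assoc] using this
  · have had : z 1 1 * z 2 1 = 0 :=
      hz.r2 1 2 1 ⟨by simp, by simp⟩ ⟨by simp, by simp⟩ ⟨by simp, by simp⟩ (by simp)
    rw [word, mul_assoc, ← mul_assoc (z 1 1 ^ _), pow_succ_mul_eq_zero had, zero_mul, mul_zero]

/-- Right multiplication by any generator sends each word into the left ideal generated by the
words. -/
lemma word_mul_gen_mem (hz : A2Rel z) (h0 : z 3 1 * z 2 1 * z 3 2 = 0) (n m : ℕ)
    {i j : ℕ} (hi : Idx3 i) (hj : Idx3 j) : word z n m * z i j ∈ genIdeal z := by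
  have i1 : Idx3 1 := ⟨by simp, by simp⟩
  have i2 : Idx3 2 := ⟨by simp, by simp⟩
  have i3 : Idx3 3 := ⟨by simp, by simp⟩
  -- The relations used, for the generators renamed row by row to `a b c`, `d e f`, `g h k`.
  have ab := hz.r1 1 1 2 i1 i1 i2 (by simp)
  have ac := hz.r1 1 1 3 i1 i1 i3 (by simp)
  have ad := hz.r2 1 2 1 i1 i2 i1 (by simp)
  have ag := hz.r2 1 3 1 i1 i3 i1 (by simp)
  have de := hz.r1 2 1 2 i2 i1 i2 (by simp)
  have df := hz.r1 2 1 3 i2 i1 i3 (by simp)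
  have dg := hz.r2 2 3 1 i2 i3 i1 (by simp)
  have gk := hz.r1 3 1 3 i3 i1 i3 (by simp)
  have bd := hz.r3 1 2 1 2 i1 i2 i1 i2 (by simp) (by simp)
  have cd := hz.r3 1 2 1 3 i1 i2 i1 i3 (by simp) (by simp)
  have bg := hz.r3 1 3 1 2 i1 i3 i1 i2 (by simp) (by simp)
  have cg := hz.r3 1 3 1 3 i1 i3 i1 i3 (by simp) (by simp)
  have fg := hz.r3 2 3 1 3 i2 i3 i1 i3 (by simp) (by simp)
  have ge : z 3 1 * z 2 2 = 0 :=
    (hz.r3 2 3 1 2 i2 i3 i1 i2 (by simp) (by simp)).symm.trans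
      (hz.r4 2 3 1 2 i2 i3 i1 i2 (by simp) (by simp) (by simp))
  have ae := sub_eq_iff_eq_add'.1 (hz.r6 1 2 1 2 i1 i2 i1 i2 (by simp) (by simp) (by simp))
  have af := sub_eq_iff_eq_add'.1 (hz.r6 1 2 1 3 i1 i2 i1 i3 (by simp) (by simp) (by simp))
  have ah := sub_eq_iff_eq_add'.1 (hz.r6 1 3 1 2 i1 i3 i1 i2 (by simp) (by simp) (by simp))
  have ak := hz.r5 1 3 1 3 i1 i3 i1 i3 (by simp) (by simp) (by simp)
  have dk := sub_eq_iff_eq_add'.1 (hz.r6 2 3 1 3 i2 i3 i1 i3 (by simp) (by simp) (by simp))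
  have gdh := hz.word_mul_32 h0
  have gdb := fun n => mul_pow_mul_of_commute bg.symm bd.symm n
  have gdc := fun n => mul_pow_mul_of_commute cg.symm cd.symm n
  have W := word_mem z
  simp only [word] at W ⊢
  set J := genIdeal z
  set a := z 1 1
  set b := z 1 2
  set c := z 1 3
  set d := z 2 1
  set e := z 2 2
  set f := z 2 3
  set g := z 3 1
  set h := z 3 2
  set k := z 3 3
  -- Moving `e, f, g, k` past `g * d ^ n`, once they have been moved past `a ^ m`.
  have gde : ∀ n, g * d ^ n * e = 0 := by
    rintro (_ | n)
    · simpa using ge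
    · rw [mul_assoc, pow_succ_mul_eq_zero de, mul_zero]
  have gdf : ∀ n x, g * d ^ n * x ∈ J → g * d ^ n * f * x ∈ J := by
    rintro (_ | n) x hx
    · rw [pow_zero, mul_one] at hx ⊢
      rw [← fg, mul_assoc]
      exact J.mul_mem_left _ hx
    · rw [mul_assoc g, pow_succ_mul_eq_zero df, mul_zero, zero_mul]
      exact J.zero_mem
  have gdg : ∀ n x, g * x ∈ J → g * d ^ n * g * x ∈ J := by
    rintro (_ | n) x hx
    · rw [pow_zero, mul_one, mul_assoc]
      exact J.mul_mem_left _ hx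
    · rw [mul_assoc g, pow_succ_mul_eq_zero dg, mul_zero, zero_mul]
      exact J.zero_mem
  have gdk : ∀ n m, g * d ^ n * k * a ^ m ∈ J := by
    rintro (_ | n) m
    · simp [gk]
    · rw [mul_assoc g, pow_mul_of_comm_add dk df, mul_add, ← mul_assoc g, gk, zero_mul, zero_add,
        ← mul_assoc g, ← mul_assoc g, ← fg, mul_assoc, mul_assoc, mul_assoc]
      refine J.mul_mem_left _ (J.mul_mem_left _ ?_)
      simpa [mul_assoc] using W n m
  obtain ⟨hi1, hi3⟩ := hi
  obtain ⟨hj1, hj3⟩ := hj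
  interval_cases i <;> interval_cases j
  · change g * d ^ n * a ^ m * a ∈ J
    simpa [pow_succ, mul_assoc] using W n (m + 1)
  · change g * d ^ n * a ^ m * b ∈ J
    rcases m with _ | m
    · rw [pow_zero, mul_one, gdb]
      exact J.mul_mem_left _ (by simpa using W n 0)
    · simp [mul_assoc, pow_succ_mul_eq_zero ab]
  · change g * d ^ n * a ^ m * c ∈ J
    rcases m with _ | m
    · rw [pow_zero, mul_one, gdc]
      exact J.mul_mem_left _ (by simpa using W n 0)
    · simp [mul_assoc, pow_succ_mul_eq_zero ac]
  · change g * d ^ n * a ^ m * d ∈ J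
    rcases m with _ | m
    · simpa [pow_succ, mul_assoc] using W (n + 1) 0
    · simp [mul_assoc, pow_succ_mul_eq_zero ad]
  · change g * d ^ n * a ^ m * e ∈ J
    rcases m with _ | m
    · simp [gde]
    · rw [mul_assoc, pow_mul_of_comm_add ae ab, mul_add, ← mul_assoc, gde, zero_mul, zero_add,
        ← mul_assoc, ← mul_assoc, gdb, mul_assoc, mul_assoc]
      refine J.mul_mem_left _ ?_
      simpa [pow_succ, mul_assoc] using W (n + 1) m
  · change g * d ^ n * a ^ m * f ∈ J
    rcases m with _ | m
    · simpa using gdf n 1 (by simpa using W n 0)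
    · rw [mul_assoc, pow_mul_of_comm_add af ac, mul_add, ← mul_assoc, ← mul_assoc, ← mul_assoc,
        gdc, mul_assoc (c * _), mul_assoc c]
      refine J.add_mem (gdf _ _ (W _ _)) (J.mul_mem_left _ ?_)
      simpa [pow_succ, mul_assoc] using W (n + 1) m
  · change g * d ^ n * a ^ m * g ∈ J
    rcases m with _ | m
    · simpa using gdg n 1 (by simpa using W 0 0)
    · simp [mul_assoc, pow_succ_mul_eq_zero ag]
  · change g * d ^ n * a ^ m * h ∈ J
    rcases m with _ | m
    · simp [gdh]
    · rw [mul_assoc, pow_mul_of_comm_add ah ab, mul_add, ← mul_assoc, gdh, zero_mul, zero_add,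
        ← mul_assoc, ← mul_assoc, gdb, mul_assoc b, mul_assoc b]
      exact J.mul_mem_left _ (gdg _ _ (by simpa using W 0 m))
  · change g * d ^ n * a ^ m * k ∈ J
    have hak : Commute (a ^ m) k := Commute.pow_left ak m
    rw [mul_assoc, hak.eq, ← mul_assoc]
    exact gdk n m

/-- The left ideal generated by the words is stable under right multiplication by the
generators. -/
lemma genIdeal_mul_gen (hz : A2Rel z) (h0 : z 3 1 * z 2 1 * z 3 2 = 0) {x : A}
    (hx : x ∈ genIdeal z) {i j : ℕ} (hi : Idx3 i) (hj : Idx3 j) : x * z i j ∈ genIdeal z := by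
  induction hx using Submodule.span_induction with
  | mem x hx =>
    obtain ⟨p, rfl⟩ := hx
    exact hz.word_mul_gen_mem h0 _ _ hi hj
  | zero => simp
  | add x y _ _ h₁ h₂ => simpa [add_mul] using add_mem h₁ h₂
  | smul r x _ h => simpa [mul_assoc] using Ideal.mul_mem_left _ r h

/-- By (R8) each adjoint is a product of two generators. -/
lemma exists_star_eq_mul (hz : A2Rel z) {i j : ℕ} (hi : Idx3 i) (hj : Idx3 j) :
    ∃ p q r s, Idx3 p ∧ Idx3 q ∧ Idx3 r ∧ Idx3 s ∧ star (z i j) = z p q * z r s := by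
  obtain ⟨hi1, hi3⟩ := hi
  obtain ⟨hj1, hj3⟩ := hj
  have i1 : Idx3 1 := ⟨by simp, by simp⟩
  have i2 : Idx3 2 := ⟨by simp, by simp⟩
  have i3 : Idx3 3 := ⟨by simp, by simp⟩
  interval_cases i <;> interval_cases j
  · exact ⟨_, _, _, _, i2, i2, i3, i3, hz.r8_11⟩
  · exact ⟨_, _, _, _, i2, i1, i3, i3, hz.r8_12⟩
  · exact ⟨_, _, _, _, i2, i1, i3, i2, hz.r8_13⟩
  · exact ⟨_, _, _, _, i1, i2, i3, i3, hz.r8_21⟩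
  · exact ⟨_, _, _, _, i1, i1, i3, i3, hz.r8_22⟩
  · exact ⟨_, _, _, _, i1, i1, i3, i2, hz.r8_23⟩
  · exact ⟨_, _, _, _, i1, i2, i2, i3, hz.r8_31⟩
  · exact ⟨_, _, _, _, i1, i1, i2, i3, hz.r8_32⟩
  · exact ⟨_, _, _, _, i1, i1, i2, i2, hz.r8_33⟩

end Ring

/-! ### Passage to operators -/

/-- The joint kernel of a left ideal of operators. -/
def jointKer {H : Type*} [NormedAddCommGroup H] [InnerProductSpace ℂ H]
    (J : Ideal (H →L[ℂ] H)) : Submodule ℂ H :=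
  ⨅ T ∈ J, LinearMap.ker (T : H →ₗ[ℂ] H)

lemma mem_jointKer {H : Type*} [NormedAddCommGroup H] [InnerProductSpace ℂ H]
    {J : Ideal (H →L[ℂ] H)} {x : H} : x ∈ jointKer J ↔ ∀ T ∈ J, T x = 0 := by
  simp [jointKer, Submodule.mem_iInf]

lemma isClosed_jointKer {H : Type*} [NormedAddCommGroup H] [InnerProductSpace ℂ H]
    (J : Ideal (H →L[ℂ] H)) : IsClosed (jointKer J : Set H) := by
  have : (jointKer J : Set H) = ⋂ T ∈ J, {x | T x = 0} := by
    ext x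
    simp [mem_jointKer]
  rw [this]
  exact isClosed_biInter fun T _ => isClosed_eq T.continuous continuous_const

end A2Rel

/-- if `(Z_{i,j})` satisfies the `A₂(0)` relations on a nonzero Hilbert
space, acts irreducibly, `Z_{3,1} ≠ 0` and `Z_{2,1} Z_{3,2} ≠ 0`, then
`Z_{3,1} Z_{2,1} Z_{3,2} ≠ 0`. -/
theorem A2_case6_nonvanishing
    {H : Type*} [NormedAddCommGroup H] [InnerProductSpace ℂ H] [CompleteSpace H]
    [Nontrivial H]
    (Z : ℕ → ℕ → (H →L[ℂ] H)) (hrel : A2Rel Z) (hirr : ActsIrreducibly Z)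
    (h31 : Z 3 1 ≠ 0) (hprod : Z 2 1 * Z 3 2 ≠ 0) :
    Z 3 1 * Z 2 1 * Z 3 2 ≠ 0 := by
  intro h0
  have hgen : ∀ i j, Idx3 i → Idx3 j → ∀ x ∈ A2Rel.jointKer (A2Rel.genIdeal Z),
      Z i j x ∈ A2Rel.jointKer (A2Rel.genIdeal Z) := by
    intro i j hi hj x hx
    rw [A2Rel.mem_jointKer] at hx ⊢
    intro T hT
    exact hx _ (hrel.genIdeal_mul_gen h0 hT hi hj)
  rcases hirr _ (A2Rel.isClosed_jointKer (A2Rel.genIdeal Z)) (by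
    intro i j hi hj x hx
    refine ⟨hgen i j hi hj x hx, ?_⟩
    obtain ⟨p, q, r, s, hp, hq, hr, hs, h⟩ := hrel.exists_star_eq_mul hi hj
    rw [h]
    exact hgen p q hp hq _ (hgen r s hr hs x hx)) with hbot | htop
  · apply hprod
    ext x
    -- The range of `Z 2 1 * Z 3 2` lies in the joint kernel, which is trivial here.
    have hx : (Z 2 1 * Z 3 2) x ∈ A2Rel.jointKer (A2Rel.genIdeal Z) := by
      rw [A2Rel.mem_jointKer]
      intro T hT
      have hT0 : T * (Z 2 1 * Z 3 2) = 0 := by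
        induction hT using Submodule.span_induction with
        | mem T hT =>
          obtain ⟨p, rfl⟩ := hT
          exact hrel.word_mul_star_eq_zero h0 _ _
        | zero => simp
        | add S T _ _ h₁ h₂ => rw [add_mul, h₁, h₂, add_zero]
        | smul R T _ h => rw [smul_eq_mul, mul_assoc, h, mul_zero]
      exact DFunLike.congr_fun hT0 x
    rw [hbot] at hx
    simpa using hx
  · apply h31
    ext x
    have hx : x ∈ A2Rel.jointKer (A2Rel.genIdeal Z) := htop ▸ Submodule.mem_top
    simpa [A2Rel.word] using A2Rel.mem_jointKer.1 hx _ (A2Rel.word_mem Z 0 0)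
end
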